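/- Let 1 ≤ p < ∞ and let B_w : ℓ_p → ℓ_p be the unilateral weighted backward shift with bounded weight sequence w = (ω_k)_{k≥1} of positive reals. The following are equivalent: (i) ∑_{k≥1} (ω_1 ω_2 ⋯ ω_k)^{-p} < ∞ and sup_{n≥1} inf_{k≥1} ∏_{j=1}^{n} ω_{k+j} ≤ 1; (ii) B_w admits a U-frequently hypercyclic subspace containing no frequently hypercyclic vector for B_w; (iii) B_w is U-frequently hypercyclic and admits a hypercyclic subspace containing no U-frequently hypercyclic vector for B_w. -/

import Mathlib

/-!
Throughout, `W n = ω₁ ⋯ ωₙ`, so that `(B ^ m x)ₙ = (W_{n+m} / W_n) x_{n+m}`.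

*Necessity of the summability.* Let `A` be the set of visits of the orbit of `x` to the open set
`‖y‖ < 2`, `y₀ > 1/2`; it has positive upper density. If `m` and `m + r` lie in `A`, then the `r`-th
coordinate of `B ^ m x` is at least `1 / (2 W_r)`, so `∑ W_r ^ (-p) ≤ 4 ^ p` over all `r` in `A - m`.
The `r` for which `A ∩ (A - r)` is large form a syndetic set (`syndetic_returns`). Averaging over `m`
bounds the sum over this set, and since `W` grows at most geometrically the whole sum is finite
(`summable_of_upperDensity_pos`, `summable_of_uFreqHypercyclic`).

*Necessity of the condition on the infima.* If one of the infima exceeds `1`, then `W_{k+m} / W_k ≥ c σ ^ m`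
for some `c > 0`, `σ > 1` and all `k ≥ 1` (`cumW_geometric`). A closed infinite-dimensional subspace
contains vectors whose tails decay as slowly as desired (`exists_slow_tails`), and for such a vector
`‖B ^ m x‖` tends to infinity, so it is not hypercyclic (`iInf_prod_le_one_of_subspace`).

*Sufficiency.* If the infima are at most `1`, then `W` cannot grow geometrically, and there are
arbitrarily large positions `j` such that `B ^ m e_j`, `m ≤ M`, is bounded by `2` in norm
(`exists_good_index`). Choose positions `L t < j t < s t < L (t + 1)` with `j t` of this kind for
`M = L t` and `s t` very far beyond `j t`. A block sequence (`Blocks.Rel`) has free values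
at the isolated positions `j t`; on the window `[s t, L (t + 1))` it repeats a finite pattern, chosen
so that `B ^ m x` is near a prescribed vector at the beginning of each repetition, multiplied by the
value of the sequence at one of the isolated positions; elsewhere it vanishes. The summability makes
the windows negligible in norm for the earlier powers of `B`. Hence the block sequences in `ℓ_p` form
a closed infinite-dimensional subspace, and, all patterns being enumerated infinitely often for every
isolated position, the orbit of every nonzero block sequence approaches every vector during
infinitely many windows (`Blocks.Rel.hit_le`, `frequently_hits`).

The number of repetitions decides about the frequency of the visits. If the `t`-th window has length
comparable to `s t`, the upper densities are positive (`uFreq_of_mem`); if it contains one copy of the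
pattern, then they vanish for a suitable open set (`not_uFreq_of_mem`). In both cases the long gap
before `s t` makes the lower density zero for that open set (`not_freq_of_mem`): between `L t` and
`s t` a block sequence has one nonzero coordinate only, so `B ^ m x` cannot have two consecutive ones.
-/

open Filter Set
open scoped ENNReal

/-- The upper asymptotic density of a set of natural numbers. -/
noncomputable def upperDensity (A : Set ℕ) : ℝ :=
  Filter.limsup (fun N : ℕ => ((A ∩ Set.Iic N).ncard : ℝ) / (N + 1)) Filter.atTop

/-- The lower asymptotic density of a set of natural numbers. -/
noncomputable def lowerDensity (A : Set ℕ) : ℝ :=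
  Filter.liminf (fun N : ℕ => ((A ∩ Set.Iic N).ncard : ℝ) / (N + 1)) Filter.atTop

/-- `x` is a hypercyclic vector for `T`: its orbit under `T` is dense. -/
def IsHypercyclicVector {X : Type*} [NormedAddCommGroup X] [NormedSpace ℝ X]
    (T : X →L[ℝ] X) (x : X) : Prop :=
  Dense (Set.range fun n : ℕ => (T ^ n) x)

/-- `x` is a `𝒰`-frequently hypercyclic vector for `T`: every nonempty open set is
visited by the orbit along a set of times of positive upper density. -/
def IsUFreqHypercyclicVector {X : Type*} [NormedAddCommGroup X] [NormedSpace ℝ X]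
    (T : X →L[ℝ] X) (x : X) : Prop :=
  ∀ U : Set X, IsOpen U → U.Nonempty → 0 < upperDensity {n : ℕ | (T ^ n) x ∈ U}

/-- `x` is a frequently hypercyclic vector for `T`: every nonempty open set is
visited by the orbit along a set of times of positive lower density. -/
def IsFreqHypercyclicVector {X : Type*} [NormedAddCommGroup X] [NormedSpace ℝ X]
    (T : X →L[ℝ] X) (x : X) : Prop :=
  ∀ U : Set X, IsOpen U → U.Nonempty → 0 < lowerDensity {n : ℕ | (T ^ n) x ∈ U}

/-! ### Partial products and powers of the shift -/

/-- The partial products `W n = ω₁ ⋯ ωₙ` of the weight, with `W 0 = 1`. -/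
noncomputable def cumW (w : ℕ → ℝ) (n : ℕ) : ℝ := ∏ j ∈ Finset.Icc 1 n, w j

lemma cumW_zero (w : ℕ → ℝ) : cumW w 0 = 1 := by simp [cumW]

lemma cumW_succ (w : ℕ → ℝ) (n : ℕ) : cumW w (n + 1) = cumW w n * w (n + 1) := by
  unfold cumW
  rw [Finset.prod_Icc_succ_top (by omega)]

lemma cumW_pos {w : ℕ → ℝ} (hw : ∀ k : ℕ, 1 ≤ k → 0 < w k) (n : ℕ) : 0 < cumW w n :=
  Finset.prod_pos fun j hj => hw j (Finset.mem_Icc.1 hj).1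

lemma prod_shift (w : ℕ → ℝ) (k n : ℕ) :
    (∏ j ∈ Finset.Icc 1 n, w (k + j)) * cumW w k = cumW w (k + n) := by
  induction n with
  | zero => simp
  | succ n ih =>
    rw [Finset.prod_Icc_succ_top (by omega), ← add_assoc, cumW_succ, ← ih]
    ring_nf

lemma cumW_add_le {w : ℕ → ℝ} (hw : ∀ k : ℕ, 1 ≤ k → 0 < w k) {C : ℝ}
    (hC1 : 1 ≤ C) (hC : ∀ k : ℕ, 1 ≤ k → w k ≤ C) (n m : ℕ) :
    cumW w (n + m) ≤ C ^ m * cumW w n := by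
  induction m with
  | zero => simp
  | succ m ih =>
    rw [← add_assoc, cumW_succ, pow_succ]
    calc cumW w (n + m) * w (n + m + 1) ≤ (C ^ m * cumW w n) * C :=
          mul_le_mul ih (hC _ (by omega)) (hw _ (by omega)).le
            (by have := cumW_pos hw n; positivity)
      _ = _ := by ring

/-- In terms of the partial products, the powers of the shift act by
`(B ^ m x)ₙ = (W_{n+m} / W_n) x_{n+m}`. -/
lemma shift_pow_apply {p : ℝ≥0∞} [Fact (1 ≤ p)] {w : ℕ → ℝ}
    (hw : ∀ k : ℕ, 1 ≤ k → 0 < w k)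
    {B : lp (fun _ : ℕ => ℝ) p →L[ℝ] lp (fun _ : ℕ => ℝ) p}
    (hB : ∀ (x : lp (fun _ : ℕ => ℝ) p) (n : ℕ), (B x) n = w (n + 1) * x (n + 1))
    (x : lp (fun _ : ℕ => ℝ) p) (m n : ℕ) :
    ((B ^ m) x) n = (cumW w n)⁻¹ * (cumW w (n + m) * x (n + m)) := by
  have hW := fun n => (cumW_pos hw n).ne'
  induction m generalizing n with
  | zero =>
    have := hW n
    simp only [pow_zero, one_apply_eq_self, add_zero]
    field_simp
  | succ m ih =>
    rw [pow_succ', mul_apply_eq_comp, hB, ih, cumW_succ]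
    have h1 : n + 1 + m = n + (m + 1) := by omega
    have h2 := (hw (n + 1) (by omega)).ne'
    have h3 := hW n
    rw [h1]
    field_simp

lemma toReal_pos_of_fact {p : ℝ≥0∞} [hp1 : Fact (1 ≤ p)] (hp : p ≠ ∞) : 0 < p.toReal :=
  ENNReal.toReal_pos (zero_lt_one.trans_le hp1.out).ne' hp

/-! ### Densities -/

lemma density_ratio_nonneg (A : Set ℕ) (N : ℕ) :
    0 ≤ ((A ∩ Set.Iic N).ncard : ℝ) / (N + 1) := by positivity

lemma ncard_inter_Iic_le (A : Set ℕ) (N : ℕ) : (A ∩ Set.Iic N).ncard ≤ N + 1 := by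
  calc (A ∩ Set.Iic N).ncard ≤ (Set.Iic N).ncard :=
        Set.ncard_le_ncard Set.inter_subset_right (Set.finite_Iic N)
    _ = N + 1 := by
        rw [← Finset.coe_Iic, Set.ncard_coe_finset, Nat.card_Iic]

lemma density_ratio_le_one (A : Set ℕ) (N : ℕ) :
    ((A ∩ Set.Iic N).ncard : ℝ) / (N + 1) ≤ 1 := by
  rw [div_le_one (by positivity)]
  exact_mod_cast ncard_inter_Iic_le A N

lemma density_isBoundedUnder_le (A : Set ℕ) :
    IsBoundedUnder (· ≤ ·) atTop fun N : ℕ => ((A ∩ Set.Iic N).ncard : ℝ) / (N + 1) :=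
  isBoundedUnder_of ⟨1, density_ratio_le_one A⟩

lemma density_isBoundedUnder_ge (A : Set ℕ) :
    IsBoundedUnder (· ≥ ·) atTop fun N : ℕ => ((A ∩ Set.Iic N).ncard : ℝ) / (N + 1) :=
  isBoundedUnder_of ⟨0, density_ratio_nonneg A⟩

lemma upperDensity_pos {A : Set ℕ} {c : ℝ} (hc : 0 < c)
    (h : ∃ᶠ N : ℕ in atTop, c ≤ ((A ∩ Set.Iic N).ncard : ℝ) / (N + 1)) :
    0 < upperDensity A :=
  hc.trans_le (le_limsup_of_frequently_le h (density_isBoundedUnder_le A))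

lemma upperDensity_le {A : Set ℕ} {c : ℝ}
    (h : ∀ᶠ N : ℕ in atTop, ((A ∩ Set.Iic N).ncard : ℝ) / (N + 1) ≤ c) :
    upperDensity A ≤ c :=
  limsup_le_of_le (density_isBoundedUnder_ge A).isCoboundedUnder_le h

lemma lowerDensity_le {A : Set ℕ} {c : ℝ}
    (h : ∃ᶠ N : ℕ in atTop, ((A ∩ Set.Iic N).ncard : ℝ) / (N + 1) ≤ c) :
    lowerDensity A ≤ c :=
  liminf_le_of_frequently_le h (density_isBoundedUnder_ge A)

lemma frequently_of_upperDensity_pos {A : Set ℕ} (h : 0 < upperDensity A) :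
    ∃ δ : ℝ, 0 < δ ∧ ∃ᶠ N : ℕ in atTop, δ * (N + 1) ≤ ((A ∩ Set.Iic N).ncard : ℝ) := by
  refine ⟨upperDensity A / 2, by positivity, ?_⟩
  have := frequently_lt_of_lt_limsup (density_isBoundedUnder_ge A).isCoboundedUnder_le
    (show upperDensity A / 2 < upperDensity A by linarith)
  refine this.mono fun N hN => ?_
  rw [lt_div_iff₀ (by positivity)] at hN
  exact hN.le

lemma upperDensity_empty_le : upperDensity ∅ ≤ 0 := upperDensity_le (by simp)

lemma IsUFreqHypercyclicVector.isHypercyclicVector {X : Type*} [NormedAddCommGroup X]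
    [NormedSpace ℝ X] {T : X →L[ℝ] X} {x : X} (h : IsUFreqHypercyclicVector T x) :
    IsHypercyclicVector T x := by
  refine dense_iff_inter_open.2 fun U hU hne => ?_
  by_contra hcon
  have h0 : {n : ℕ | (T ^ n) x ∈ U} = ∅ := by
    ext n
    simp only [mem_ofPred_eq, mem_empty_iff_false, iff_false]
    exact fun hn => hcon ⟨_, hn, n, rfl⟩
  have h1 := h U hU hne
  rw [h0] at h1
  exact h1.not_ge upperDensity_empty_le

/-! ### Summability from positive upper density -/

open Classical in
/-- The number of `m ≤ N` for which both `m` and `m + r` lie in `A`. -/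
noncomputable def pairCount (A : Set ℕ) (r N : ℕ) : ℕ :=
  ((Finset.range (N + 1)).filter fun m => m ∈ A ∧ m + r ∈ A).card

open Classical in
lemma ncard_inter_Iic_eq (A : Set ℕ) (N : ℕ) :
    (A ∩ Set.Iic N).ncard = ((Finset.range (N + 1)).filter fun m => m ∈ A).card := by
  rw [← Set.ncard_coe_finset]
  congr 1
  ext m
  simp only [Set.mem_inter_iff, Set.mem_Iic, Finset.coe_filter, Finset.mem_range, mem_ofPred_eq]
  constructor
  · rintro ⟨h1, h2⟩; exact ⟨by omega, h1⟩
  · rintro ⟨h1, h2⟩; exact ⟨h2, by omega⟩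

open Classical in
lemma card_shift_ge (A : Set ℕ) (f D N : ℕ) (hf : f ≤ D) :
    (A ∩ Set.Iic N).ncard ≤ ((Finset.range (N + 1)).filter fun m => m + f ∈ A).card + D := by
  rw [ncard_inter_Iic_eq]
  calc _ ≤ ((((Finset.range (N + 1)).filter fun m => m + f ∈ A).image (· + f)) ∪
        Finset.range D).card := by
        refine Finset.card_le_card fun m hm => ?_
        simp only [Finset.mem_filter, Finset.mem_range, Finset.mem_union, Finset.mem_image] at hm ⊢
        by_cases h : m < D
        · exact Or.inr h
        · refine Or.inl ⟨m - f, ⟨by omega, ?_⟩, by omega⟩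
          rw [Nat.sub_add_cancel (by omega)]
          exact hm.2
    _ ≤ _ := by
        refine (Finset.card_union_le _ _).trans ?_
        rw [Finset.card_range]
        exact Nat.add_le_add_right Finset.card_image_le _

open Classical in
lemma card_pair_shift_le (A : Set ℕ) (f f' D N : ℕ) (hff : f < f') (hf : f' ≤ D) :
    ((Finset.range (N + 1)).filter fun m => m + f ∈ A ∧ m + f' ∈ A).card ≤
      pairCount A (f' - f) N + D := by
  unfold pairCount
  calc _ = (((Finset.range (N + 1)).filter fun m => m + f ∈ A ∧ m + f' ∈ A).image (· + f)).card :=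
        (Finset.card_image_of_injective _ (add_left_injective f)).symm
    _ ≤ (((Finset.range (N + 1)).filter fun m => m ∈ A ∧ m + (f' - f) ∈ A) ∪
          Finset.Ico (N + 1) (N + 1 + D)).card := by
        refine Finset.card_le_card fun m hm => ?_
        simp only [Finset.mem_filter, Finset.mem_range, Finset.mem_union, Finset.mem_image,
          Finset.mem_Ico] at hm ⊢
        obtain ⟨a, ⟨h1, h2, h3⟩, rfl⟩ := hm
        by_cases h : a + f < N + 1
        · refine Or.inl ⟨h, h2, ?_⟩
          rwa [add_assoc, Nat.add_sub_cancel' hff.le]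
        · exact Or.inr (by omega)
    _ ≤ _ := by
        refine (Finset.card_union_le _ _).trans ?_
        simp

open Classical in
/-- A Bonferroni-type inequality: many translates of a set with large counting function cannot have
small pairwise intersections. -/
lemma bonferroni_translates (A : Set ℕ) (F : Finset ℕ) (N : ℕ) :
    ∑ f ∈ F, (((Finset.range (N + 1)).filter fun m => m + f ∈ A).card : ℝ) ≤
      (N + 1) + ∑ f ∈ F, ∑ f' ∈ F.erase f,
        (((Finset.range (N + 1)).filter fun m => m + f ∈ A ∧ m + f' ∈ A).card : ℝ) := by
  set ind : ℕ → ℕ → ℝ := fun m f => if m + f ∈ A then 1 else 0 with hind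
  have e1 : ∀ f, (((Finset.range (N + 1)).filter fun m => m + f ∈ A).card : ℝ) =
      ∑ m ∈ Finset.range (N + 1), ind m f := fun f => by
    rw [Finset.sum_boole]
  have e2 : ∀ f f', (((Finset.range (N + 1)).filter fun m => m + f ∈ A ∧ m + f' ∈ A).card : ℝ) =
      ∑ m ∈ Finset.range (N + 1), ind m f * ind m f' := fun f f' => by
    rw [← Finset.sum_boole]
    refine Finset.sum_congr rfl fun m _ => ?_
    simp only [hind]
    split_ifs <;> simp_all
  simp only [e1, e2]
  rw [Finset.sum_comm]
  have e3 : ∑ f ∈ F, ∑ f' ∈ F.erase f, ∑ m ∈ Finset.range (N + 1), ind m f * ind m f' =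
      ∑ m ∈ Finset.range (N + 1), ∑ f ∈ F, ∑ f' ∈ F.erase f, ind m f * ind m f' := by
    rw [Finset.sum_comm]
    refine Finset.sum_congr rfl fun f _ => ?_
    rw [Finset.sum_comm]
  rw [e3]
  have e4 : ((N : ℝ) + 1) = ∑ m ∈ Finset.range (N + 1), 1 := by simp
  rw [e4, ← Finset.sum_add_distrib]
  refine Finset.sum_le_sum fun m _ => ?_
  set g := (F.filter fun f => m + f ∈ A).card with hg
  have g1 : ∑ f ∈ F, ind m f = g := by rw [Finset.sum_boole]
  have g2 : ∑ f ∈ F, ∑ f' ∈ F.erase f, ind m f * ind m f' = (g : ℝ) * g - g := by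
    rw [← g1, Finset.sum_mul, ← Finset.sum_sub_distrib]
    refine Finset.sum_congr rfl fun f hf => ?_
    rw [← Finset.mul_sum, Finset.sum_erase_eq_sub hf, mul_sub]
    congr 1
    simp only [hind]
    split_ifs <;> simp
  rw [g1, g2]
  rcases Nat.lt_or_ge g 2 with h | h
  · interval_cases g <;> simp
  · have : (2 : ℝ) ≤ g := by exact_mod_cast h
    nlinarith

/-- If `A` has density at least `δ` along an ultrafilter, then the set of `r` for which
`A ∩ (A - r)` has density at least `c` along it is syndetic, for a suitable `c > 0`. -/
lemma syndetic_returns {A : Set ℕ} {δ : ℝ} (hδ : 0 < δ) (𝓤 : Ultrafilter ℕ)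
    (h𝓤 : (𝓤 : Filter ℕ) ≤ atTop)
    (hA : ∀ᶠ N : ℕ in 𝓤, δ * (N + 1) ≤ ((A ∩ Set.Iic N).ncard : ℝ)) :
    ∃ c : ℝ, 0 < c ∧ ∃ D : ℕ, ∀ n : ℕ, ∃ r : ℕ, n ≤ r ∧ r ≤ n + D ∧
      ∀ᶠ N : ℕ in 𝓤, c * (N + 1) ≤ (pairCount A r N : ℝ) := by
  obtain ⟨k, hk⟩ := exists_nat_ge (3 / δ)
  rw [div_le_iff₀ hδ] at hk
  have hk0 : (0 : ℝ) < k := by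
    rcases Nat.eq_zero_or_pos k with h | h
    · subst h; norm_num at hk
    · exact_mod_cast h
  refine ⟨1 / (k * k), by positivity, ?_⟩
  set c : ℝ := 1 / (k * k) with hc
  by_contra hcon
  push Not at hcon
  -- Greedily, `A` has arbitrarily many translates with pairwise small intersections.
  have hF : ∀ l : ℕ, ∃ F : Finset ℕ, F.card = l ∧ ∀ f ∈ F, ∀ f' ∈ F, f < f' →
      ¬ ∀ᶠ N : ℕ in 𝓤, c * (N + 1) ≤ (pairCount A (f' - f) N : ℝ) := by
    intro l
    induction l with
    | zero => exact ⟨∅, by simp⟩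
    | succ l ih =>
      obtain ⟨F, hFc, hF⟩ := ih
      obtain ⟨n, hn⟩ := hcon (F.sup id + 1)
      have hle : ∀ f ∈ F, f ≤ F.sup id := fun f hf => Finset.le_sup (f := id) hf
      refine ⟨insert (n + F.sup id + 1) F, ?_, ?_⟩
      · rw [Finset.card_insert_of_notMem, hFc]
        intro hmem
        have := hle _ hmem
        omega
      · intro f hf f' hf' hlt
        rw [Finset.mem_insert] at hf hf'
        rcases hf' with rfl | hf'
        · rcases hf with rfl | hf
          · omega
          · have := hle _ hf
            exact Ultrafilter.eventually_not.1
              ((hn (n + F.sup id + 1 - f) (by omega) (by omega)).mono fun N h => not_le.2 h)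
        · rcases hf with rfl | hf
          · have := hle _ hf'
            omega
          · exact hF f hf f' hf' hlt
  obtain ⟨F, hFc, hF⟩ := hF k
  set D := F.sup id with hD
  have hle : ∀ f ∈ F, f ≤ D := fun f hf => Finset.le_sup (f := id) hf
  have h1 : ∀ᶠ N : ℕ in 𝓤, ∀ f ∈ F, ∀ f' ∈ F, f < f' →
      (pairCount A (f' - f) N : ℝ) < c * (N + 1) := by
    simp only [Filter.eventually_all_finset]
    intro f hf f' hf'
    by_cases hlt : f < f'
    · have := Ultrafilter.eventually_not.2 (hF f hf f' hf' hlt)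
      filter_upwards [this] with N hN _
      exact not_le.1 hN
    · exact Eventually.of_forall fun N h => absurd h hlt
  have h2 : ∀ᶠ N : ℕ in 𝓤, ((k : ℝ) + k * k) * D < N + 1 := by
    obtain ⟨N0, hN0⟩ := exists_nat_ge (((k : ℝ) + k * k) * D)
    filter_upwards [h𝓤 (eventually_ge_atTop N0)] with N hN
    have : (N0 : ℝ) ≤ N := by exact_mod_cast hN
    linarith
  obtain ⟨N, hN1, hN2, hN3⟩ := (h1.and (h2.and hA)).exists
  classical
  have hb := bonferroni_translates A F N
  have hb1 : (k : ℝ) * (δ * (N + 1) - D) ≤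
      ∑ f ∈ F, (((Finset.range (N + 1)).filter fun m => m + f ∈ A).card : ℝ) := by
    rw [← hFc, ← nsmul_eq_mul]
    refine Finset.card_nsmul_le_sum _ _ _ fun f hf => ?_
    have := card_shift_ge A f D N (hle f hf)
    have : ((A ∩ Set.Iic N).ncard : ℝ) ≤
      ((Finset.range (N + 1)).filter fun m => m + f ∈ A).card + D := by exact_mod_cast this
    linarith
  have hb2 : ∑ f ∈ F, ∑ f' ∈ F.erase f,
        (((Finset.range (N + 1)).filter fun m => m + f ∈ A ∧ m + f' ∈ A).card : ℝ) ≤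
        k * (k * (c * (N + 1) + D)) := by
    have hpos : 0 ≤ c * (N + 1) + D := by positivity
    conv_rhs => rw [← hFc, ← nsmul_eq_mul]
    refine Finset.sum_le_card_nsmul _ _ _ fun f hf => ?_
    have : (∑ f' ∈ F.erase f,
        (((Finset.range (N + 1)).filter fun m => m + f ∈ A ∧ m + f' ∈ A).card : ℝ)) ≤
        (F.erase f).card • (c * (N + 1) + D) := by
      refine Finset.sum_le_card_nsmul _ _ _ fun f' hf' => ?_
      rw [Finset.mem_erase] at hf'
      rcases lt_or_gt_of_ne hf'.1 with hlt | hlt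
      · have h3 := card_pair_shift_le A f' f D N hlt (hle f hf)
        have h4 := hN1 f' hf'.2 f hf hlt
        have h5 : (((Finset.range (N + 1)).filter fun m => m + f' ∈ A ∧ m + f ∈ A).card : ℝ) ≤
            pairCount A (f - f') N + D := by exact_mod_cast h3
        simp only [and_comm (a := _ + f' ∈ A)] at h5
        linarith
      · have h3 := card_pair_shift_le A f f' D N hlt (hle f' hf'.2)
        have h4 := hN1 f hf f' hf'.2 hlt
        have h5 : (((Finset.range (N + 1)).filter fun m => m + f ∈ A ∧ m + f' ∈ A).card : ℝ) ≤
            pairCount A (f' - f) N + D := by exact_mod_cast h3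
        linarith
    refine this.trans ?_
    rw [nsmul_eq_mul, hFc]
    refine mul_le_mul_of_nonneg_right ?_ hpos
    have := Finset.card_erase_le (s := F) (a := f)
    rw [hFc] at this
    exact_mod_cast this
  have hkc : (k : ℝ) * (k * (c * (N + 1) + D)) = (N + 1) + k * k * D := by
    rw [hc]; field_simp
  have hN0 : (0 : ℝ) ≤ N := by positivity
  rw [hkc] at hb2
  have : 3 * ((N : ℝ) + 1) ≤ k * δ * (N + 1) := mul_le_mul_of_nonneg_right hk (by positivity)
  nlinarith

/-- If all the sums of `u` over the differences `A - m`, `m ∈ A`, are bounded by the same constant,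
where `A` has positive upper density and `u` decreases at most geometrically, then `u` is summable:
averaging over `m` bounds the sum of `u` over a syndetic set. -/
lemma summable_of_upperDensity_pos {A : Set ℕ} (hA : 0 < upperDensity A) {u : ℕ → ℝ}
    (hu : ∀ n, 0 ≤ u n) {C K : ℝ} (hC : 1 ≤ C) (hstep : ∀ n, u n ≤ C * u (n + 1))
    (hK : ∀ m ∈ A, ∀ S : Finset ℕ, (∀ r ∈ S, m + r ∈ A) → ∑ r ∈ S, u r ≤ K) :
    Summable u := by
  classical
  obtain ⟨δ, hδ, hfreq⟩ := frequently_of_upperDensity_pos hA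
  have : NeBot (atTop ⊓ 𝓟 {N : ℕ | δ * (N + 1) ≤ ((A ∩ Set.Iic N).ncard : ℝ)}) :=
    frequently_mem_iff_neBot.1 hfreq
  set 𝓤 := Ultrafilter.of (atTop ⊓ 𝓟 {N : ℕ | δ * (N + 1) ≤ ((A ∩ Set.Iic N).ncard : ℝ)})
  have hU := Ultrafilter.of_le (atTop ⊓ 𝓟 {N : ℕ | δ * (N + 1) ≤ ((A ∩ Set.Iic N).ncard : ℝ)})
  have h1 : (𝓤 : Filter ℕ) ≤ atTop := hU.trans inf_le_left
  have h2 : ∀ᶠ N : ℕ in 𝓤, δ * (N + 1) ≤ ((A ∩ Set.Iic N).ncard : ℝ) :=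
    (hU.trans inf_le_right) (mem_principal_self _)
  obtain ⟨c, hc, D, hD⟩ := syndetic_returns hδ 𝓤 h1 h2
  set R : Set ℕ := {r | ∀ᶠ N : ℕ in 𝓤, c * (N + 1) ≤ (pairCount A r N : ℝ)} with hR
  have hK0 : 0 ≤ K := by
    have hne : A.Nonempty := by
      by_contra h
      rw [Set.not_nonempty_iff_eq_empty] at h
      rw [h] at hA
      exact hA.not_ge upperDensity_empty_le
    obtain ⟨m, hm⟩ := hne
    simpa using hK m hm ∅ (by simp)
  have hRsum : Summable (R.indicator u) := by
    refine summable_of_sum_range_le (c := K / c) (fun n => Set.indicator_nonneg (fun x _ => hu x) n)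
      fun n => ?_
    have h3 : ∀ᶠ N : ℕ in 𝓤, ∀ r ∈ Finset.range n, r ∈ R →
        c * (N + 1) ≤ (pairCount A r N : ℝ) := by
      rw [Filter.eventually_all_finset]
      intro r _
      by_cases hr : r ∈ R
      · exact Eventually.mono hr fun N hN _ => hN
      · exact Eventually.of_forall fun N h => absurd h hr
    obtain ⟨N, hN⟩ := h3.exists
    have hNpos : (0 : ℝ) < N + 1 := by positivity
    rw [le_div_iff₀ hc]
    refine le_of_mul_le_mul_right ?_ hNpos
    calc (∑ r ∈ Finset.range n, R.indicator u r) * c * (N + 1)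
        = ∑ r ∈ Finset.range n, R.indicator u r * (c * (N + 1)) := by
          rw [mul_assoc, Finset.sum_mul]
      _ ≤ ∑ r ∈ Finset.range n, u r * pairCount A r N := by
          refine Finset.sum_le_sum fun r hr => ?_
          by_cases hrR : r ∈ R
          · rw [Set.indicator_of_mem hrR]
            exact mul_le_mul_of_nonneg_left (hN r hr hrR) (hu r)
          · rw [Set.indicator_of_notMem hrR, zero_mul]
            exact mul_nonneg (hu r) (by positivity)
      _ = ∑ r ∈ Finset.range n, ∑ m ∈ Finset.range (N + 1),
            if m ∈ A ∧ m + r ∈ A then u r else 0 := by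
          refine Finset.sum_congr rfl fun r _ => ?_
          rw [← Finset.sum_filter, Finset.sum_const, nsmul_eq_mul, mul_comm]
          rfl
      _ = ∑ m ∈ Finset.range (N + 1), ∑ r ∈ Finset.range n,
            if m ∈ A ∧ m + r ∈ A then u r else 0 := Finset.sum_comm
      _ ≤ ∑ m ∈ Finset.range (N + 1), K := by
          refine Finset.sum_le_sum fun m _ => ?_
          by_cases hm : m ∈ A
          · simp only [hm, true_and]
            rw [← Finset.sum_filter]
            exact hK m hm _ fun r hr => (Finset.mem_filter.1 hr).2
          · simpa [hm] using hK0
      _ = K * (N + 1) := by simp [mul_comm]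
  have hstep' : ∀ i n, u n ≤ C ^ i * u (n + i) := by
    intro i
    induction i with
    | zero => simp
    | succ i ih =>
      intro n
      calc u n ≤ C ^ i * u (n + i) := ih n
        _ ≤ C ^ i * (C * u (n + i + 1)) := by gcongr; exact hstep _
        _ = _ := by ring_nf
  refine Summable.of_nonneg_of_le hu (f := fun n => ∑ i ∈ Finset.range (D + 1),
    C ^ i * R.indicator u (n + i)) (fun n => ?_) ?_
  · obtain ⟨r, hr1, hr2, hr3⟩ := hD n
    obtain ⟨i, rfl⟩ := Nat.exists_eq_add_of_le hr1
    refine (hstep' i n).trans ?_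
    have : C ^ i * u (n + i) = C ^ i * R.indicator u (n + i) := by
      rw [Set.indicator_of_mem (show n + i ∈ R from hr3)]
    rw [this]
    refine Finset.single_le_sum (f := fun i => C ^ i * R.indicator u (n + i)) (fun j _ => ?_)
      (Finset.mem_range.2 (by omega))
    exact mul_nonneg (by positivity) (Set.indicator_nonneg (fun x _ => hu x) _)
  · refine summable_sum fun i _ => ?_
    exact ((summable_nat_add_iff i).2 hRsum).mul_left _

/-- The Bayart–Ruzsa necessary condition: if the shift has a `𝒰`-frequently hypercyclic vector, then
`∑ W_n ^ (-p) < ∞`. -/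
lemma summable_of_uFreqHypercyclic {p : ℝ≥0∞} [Fact (1 ≤ p)] (hp : p ≠ ∞) {w : ℕ → ℝ}
    (hw : ∀ k : ℕ, 1 ≤ k → 0 < w k) {C : ℝ} (hC1 : 1 ≤ C) (hC : ∀ k : ℕ, 1 ≤ k → w k ≤ C)
    {B : lp (fun _ : ℕ => ℝ) p →L[ℝ] lp (fun _ : ℕ => ℝ) p}
    (hB : ∀ (x : lp (fun _ : ℕ => ℝ) p) (n : ℕ), (B x) n = w (n + 1) * x (n + 1))
    {x : lp (fun _ : ℕ => ℝ) p} (hx : IsUFreqHypercyclicVector B x) :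
    Summable fun n => (cumW w n) ^ (-p.toReal) := by
  have hP := toReal_pos_of_fact hp
  have hW := fun n => cumW_pos hw n
  have hcont : ∀ k : ℕ, Continuous fun y : lp (fun _ : ℕ => ℝ) p => y k := fun k =>
    (lp.lipschitzWith_one_eval (E := fun _ : ℕ => ℝ) p k).continuous
  set V : Set (lp (fun _ : ℕ => ℝ) p) := {y | ‖y‖ < 2} ∩ {y | 1 / 2 < y 0} with hV
  have hVo : IsOpen V := (isOpen_lt continuous_norm continuous_const).inter
    (isOpen_lt continuous_const (hcont 0))
  have hVne : V.Nonempty := by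
    refine ⟨lp.single p 0 1, ?_, ?_⟩
    · simp only [mem_ofPred_eq]
      rw [lp.norm_single (pos_of_ne_zero (by rintro rfl; simp at hP))]
      norm_num
    · simp only [mem_ofPred_eq]
      rw [lp.single_apply_self]
      norm_num
  have hd := hx V hVo hVne
  refine summable_of_upperDensity_pos hd (C := C ^ p.toReal) (K := 4 ^ p.toReal)
    (fun n => Real.rpow_nonneg (hW n).le _) (Real.one_le_rpow hC1 hP.le) (fun n => ?_) ?_
  · rw [Real.rpow_neg (hW _).le, Real.rpow_neg (hW _).le, ← Real.inv_rpow (hW _).le,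
      ← Real.inv_rpow (hW _).le, ← Real.mul_rpow (by linarith) (inv_nonneg.2 (hW _).le)]
    refine Real.rpow_le_rpow (inv_nonneg.2 (hW _).le) ?_ hP.le
    have h1 := cumW_add_le hw hC1 hC n 1
    rw [pow_one] at h1
    have h2 := hW n
    have h3 := hW (n + 1)
    field_simp
    linarith
  · intro m hm S hS
    have hm1 : ‖(B ^ m) x‖ < 2 := hm.1
    have hxk : ∀ k, k ∈ {n : ℕ | (B ^ n) x ∈ V} → 1 / 2 < cumW w k * x k := by
      intro k hk
      have h1 : 1 / 2 < ((B ^ k) x) 0 := hk.2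
      rwa [shift_pow_apply hw hB, cumW_zero, inv_one, one_mul, zero_add] at h1
    have h4 := lp.sum_rpow_le_norm_rpow hP ((B ^ m) x) S
    have h5 : ‖(B ^ m) x‖ ^ p.toReal ≤ 2 ^ p.toReal :=
      Real.rpow_le_rpow (norm_nonneg _) hm1.le hP.le
    have h6 : ∑ r ∈ S, (cumW w r) ^ (-p.toReal) * (1 / 2) ^ p.toReal ≤
        ∑ r ∈ S, ‖((B ^ m) x) r‖ ^ p.toReal := by
      refine Finset.sum_le_sum fun r hr => ?_
      have h7 := hxk _ (hS r hr)
      rw [shift_pow_apply hw hB, Real.rpow_neg (hW _).le, ← Real.inv_rpow (hW _).le,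
        ← Real.mul_rpow (inv_nonneg.2 (hW _).le) (by norm_num)]
      have h8 := inv_pos.2 (hW r)
      refine Real.rpow_le_rpow (by positivity) ?_ hP.le
      rw [add_comm r m, Real.norm_of_nonneg (by nlinarith)]
      exact mul_le_mul_of_nonneg_left h7.le h8.le
    rw [← Finset.sum_mul] at h6
    have h9 : (∑ r ∈ S, (cumW w r) ^ (-p.toReal)) * (1 / 2) ^ p.toReal ≤ 2 ^ p.toReal :=
      h6.trans (h4.trans h5)
    have h10 : (4 : ℝ) ^ p.toReal = 2 ^ p.toReal * 2 ^ p.toReal := by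
      rw [← Real.mul_rpow (by norm_num) (by norm_num)]; norm_num
    have h11 : (1 / 2 : ℝ) ^ p.toReal * 2 ^ p.toReal = 1 := by
      rw [← Real.mul_rpow (by norm_num) (by norm_num)]; norm_num
    calc ∑ r ∈ S, (cumW w r) ^ (-p.toReal)
        = ((∑ r ∈ S, (cumW w r) ^ (-p.toReal)) * (1 / 2) ^ p.toReal) * 2 ^ p.toReal := by
          rw [mul_assoc, h11, mul_one]
      _ ≤ _ := by rw [h10]; gcongr

/-! ### Hypercyclic subspaces force small products of weights -/

/-- The truncation of a sequence in `ℓ_p` to the coordinates `k ≥ m`. -/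
def tailTrunc {p : ℝ≥0∞} (m : ℕ) (x : lp (fun _ : ℕ => ℝ) p) : lp (fun _ : ℕ => ℝ) p :=
  ⟨fun k => if m ≤ k then x k else 0, (lp.memℓp x).mono' fun k => by split_ifs <;> simp⟩

lemma tailTrunc_apply {p : ℝ≥0∞} (m : ℕ) (x : lp (fun _ : ℕ => ℝ) p) (k : ℕ) :
    tailTrunc m x k = if m ≤ k then x k else 0 := rfl

lemma tailTrunc_sub {p : ℝ≥0∞} (m : ℕ) (x y : lp (fun _ : ℕ => ℝ) p) :
    tailTrunc m (x - y) = tailTrunc m x - tailTrunc m y := by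
  ext k
  simp only [tailTrunc_apply, lp.coeFn_sub, Pi.sub_apply]
  split_ifs <;> simp

lemma norm_tailTrunc_le {p : ℝ≥0∞} [hp1 : Fact (1 ≤ p)] (m : ℕ) (x : lp (fun _ : ℕ => ℝ) p) :
    ‖tailTrunc m x‖ ≤ ‖x‖ := by
  refine lp.norm_mono (zero_lt_one.trans_le hp1.out).ne' fun k => ?_
  rw [tailTrunc_apply]
  split_ifs <;> simp

lemma exists_unit_vanishing {p : ℝ≥0∞} [hp1 : Fact (1 ≤ p)]
    {Y : Submodule ℝ (lp (fun _ : ℕ => ℝ) p)} (hY : ¬ FiniteDimensional ℝ Y) (N : ℕ) :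
    ∃ y ∈ Y, ‖y‖ = 1 ∧ ∀ k < N, y k = 0 := by
  let Φ : Y →ₗ[ℝ] (Fin N → ℝ) :=
    { toFun := fun y i => (y : lp (fun _ : ℕ => ℝ) p) i
      map_add' := fun a b => by ext i; simp
      map_smul' := fun a b => by ext i; simp }
  have hinj : ¬ Function.Injective Φ := fun h => hY (FiniteDimensional.of_injective Φ h)
  rw [← LinearMap.ker_eq_bot, Submodule.eq_bot_iff] at hinj
  push Not at hinj
  obtain ⟨y, hy, hy0⟩ := hinj
  have hne : (y : lp (fun _ : ℕ => ℝ) p) ≠ 0 := fun h => hy0 (Subtype.ext h)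
  refine ⟨‖(y : lp (fun _ : ℕ => ℝ) p)‖⁻¹ • (y : lp (fun _ : ℕ => ℝ) p), Y.smul_mem _ y.2, ?_, ?_⟩
  · rw [norm_smul, norm_inv, norm_norm, inv_mul_cancel₀ (norm_ne_zero_iff.2 hne)]
  · intro k hk
    have : Φ y ⟨k, hk⟩ = 0 := by rw [LinearMap.mem_ker.1 hy]; rfl
    have h2 : (y : lp (fun _ : ℕ => ℝ) p) k = 0 := this
    rw [lp.coeFn_smul, Pi.smul_apply, h2, smul_zero]

/-- The inductive step of `exists_slow_tails`: a small change of `v` inside `Y` makes its tail after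
`N j` large. -/
lemma exists_slow_tails_step {p : ℝ≥0∞} [hp1 : Fact (1 ≤ p)]
    {Y : Submodule ℝ (lp (fun _ : ℕ => ℝ) p)} (hY : ¬ FiniteDimensional ℝ Y) (N : ℕ → ℕ)
    (j : ℕ) (v : Y) : ∃ v' : Y, ‖(v' : lp (fun _ : ℕ => ℝ) p) - v‖ ≤ (1 / 4 : ℝ) ^ j ∧
      (1 / 4 : ℝ) ^ j ≤ ‖tailTrunc (N j) (v' : lp (fun _ : ℕ => ℝ) p)‖ := by
  -- Choosing the sign of the increment prevents cancellation with the tail built so far.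
  obtain ⟨y, hy, hy1, hy0⟩ := exists_unit_vanishing hY (N j)
  set a : ℝ := (1 / 4 : ℝ) ^ j with ha
  have ha0 : 0 < a := by positivity
  let v₁ : lp (fun _ : ℕ => ℝ) p := v + a • y
  let v₂ : lp (fun _ : ℕ => ℝ) p := v - a • y
  have hay : ‖a • y‖ = a := by rw [norm_smul, hy1, mul_one, Real.norm_of_nonneg ha0.le]
  have hdiff : tailTrunc (N j) v₁ - tailTrunc (N j) v₂ = (2 : ℝ) • (a • y) := by
    rw [← tailTrunc_sub]
    have h1 : v₁ - v₂ = (2 : ℝ) • (a • y) := by simp only [v₁, v₂, two_smul]; abel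
    rw [h1]
    ext k
    rw [tailTrunc_apply]
    split_ifs with h
    · rfl
    · simp [hy0 k (not_le.1 h)]
  have hn : 2 * a ≤ ‖tailTrunc (N j) v₁‖ + ‖tailTrunc (N j) v₂‖ := by
    calc 2 * a = ‖tailTrunc (N j) v₁ - tailTrunc (N j) v₂‖ := by
          rw [hdiff, norm_smul, hay, Real.norm_of_nonneg (by norm_num)]
      _ ≤ _ := norm_sub_le _ _
  rcases le_total a ‖tailTrunc (N j) v₁‖ with h | h
  · refine ⟨⟨v₁, Y.add_mem v.2 (Y.smul_mem _ hy)⟩, ?_, h⟩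
    simp only [v₁, add_sub_cancel_left]
    exact hay.le
  · refine ⟨⟨v₂, Y.sub_mem v.2 (Y.smul_mem _ hy)⟩, ?_, show a ≤ ‖tailTrunc (N j) v₂‖ by linarith⟩
    simp only [v₂, sub_sub_cancel_left, norm_neg]
    exact hay.le

/-- An infinite-dimensional closed subspace of `ℓ_p` contains vectors whose tails decay as slowly
as prescribed. -/
lemma exists_slow_tails {p : ℝ≥0∞} [hp1 : Fact (1 ≤ p)]
    {Y : Submodule ℝ (lp (fun _ : ℕ => ℝ) p)} (hY : ¬ FiniteDimensional ℝ Y)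
    (hYc : IsClosed (Y : Set (lp (fun _ : ℕ => ℝ) p))) (N : ℕ → ℕ) :
    ∃ x ∈ Y, ∀ j, (1 / 4 : ℝ) ^ j * (2 / 3) ≤ ‖tailTrunc (N j) x‖ := by
  choose f hf1 hf2 using exists_slow_tails_step hY N
  obtain ⟨v, hv⟩ : ∃ v : ℕ → Y, ∀ j, v (j + 1) = f j (v j) :=
    ⟨fun j => Nat.rec 0 (fun j v => f j v) j, fun _ => rfl⟩
  have hv1 : ∀ j, ‖(v (j + 1) : lp (fun _ : ℕ => ℝ) p) - v j‖ ≤ (1 / 4 : ℝ) ^ j :=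
    fun j => hv j ▸ hf1 j (v j)
  have hv2 : ∀ j, (1 / 4 : ℝ) ^ j ≤ ‖tailTrunc (N j) (v (j + 1) : lp (fun _ : ℕ => ℝ) p)‖ :=
    fun j => hv j ▸ hf2 j (v j)
  have hd : ∀ j, dist (v j : lp (fun _ : ℕ => ℝ) p) (v (j + 1)) ≤ 1 * (1 / 4 : ℝ) ^ j := fun j => by
    rw [dist_comm, dist_eq_norm, one_mul]; exact hv1 j
  have hc : CauchySeq fun j => (v j : lp (fun _ : ℕ => ℝ) p) :=
    cauchySeq_of_le_geometric (1 / 4) 1 (by norm_num) hd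
  obtain ⟨x, hx⟩ := cauchySeq_tendsto_of_complete hc
  refine ⟨x, hYc.mem_of_tendsto hx (Eventually.of_forall fun j => (v j).2), fun j => ?_⟩
  have h1 := dist_le_of_le_geometric_of_tendsto (1 / 4) 1 (by norm_num) hd hx (j + 1)
  rw [dist_eq_norm] at h1
  have h2 := norm_tailTrunc_le (N j) ((v (j + 1) : lp (fun _ : ℕ => ℝ) p) - x)
  rw [tailTrunc_sub] at h2
  have h3 := norm_sub_norm_le (tailTrunc (N j) (v (j + 1) : lp (fun _ : ℕ => ℝ) p))
    (tailTrunc (N j) x)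
  have h4 := hv2 j
  have h5 : 1 * (1 / 4 : ℝ) ^ (j + 1) / (1 - 1 / 4) = (1 / 4 : ℝ) ^ j * (1 / 3) := by
    rw [pow_succ]; ring
  rw [h5] at h1
  linarith

/-- If the products of `n` consecutive weights, from the second one on, are at least `ρ > 1`, then
products of `m` consecutive weights grow at least geometrically in `m`. -/
lemma cumW_geometric {w : ℕ → ℝ} (hw : ∀ k : ℕ, 1 ≤ k → 0 < w k) {C : ℝ}
    (hC1 : 1 ≤ C) (hC : ∀ k : ℕ, 1 ≤ k → w k ≤ C) {n : ℕ} (hn : 1 ≤ n) {ρ : ℝ} (hρ : 1 < ρ)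
    (h : ∀ k, 1 ≤ k → ρ * cumW w k ≤ cumW w (k + n)) :
    ∃ c σ : ℝ, 0 < c ∧ 1 < σ ∧ ∀ m k, 1 ≤ k → c * σ ^ m * cumW w k ≤ cumW w (k + m) := by
  have hW := fun n => cumW_pos hw n
  have hn0 : (0 : ℝ) < n := by exact_mod_cast hn
  refine ⟨(C ^ n)⁻¹, ρ ^ ((1 : ℝ) / n), by positivity, Real.one_lt_rpow hρ (by positivity), ?_⟩
  set σ := ρ ^ ((1 : ℝ) / n) with hσ
  have hσ1 : 1 < σ := Real.one_lt_rpow hρ (by positivity)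
  have hσn : σ ^ n = ρ := by
    rw [hσ, ← Real.rpow_natCast, ← Real.rpow_mul (by linarith), one_div_mul_cancel hn0.ne',
      Real.rpow_one]
  have hCn : 0 < C ^ n := by positivity
  intro m
  induction m using Nat.strong_induction_on with
  | _ m ih =>
    intro k hk
    rcases lt_or_ge m n with hm | hm
    · have h1 := cumW_add_le hw hC1 hC (k + m) (n - m)
      have h2 : k + m + (n - m) = k + n := by omega
      rw [h2] at h1
      have h3 : C ^ (n - m) ≤ C ^ n := pow_le_pow_right₀ hC1 (by omega)
      have h4 : σ ^ m ≤ ρ := hσn ▸ pow_le_pow_right₀ hσ1.le hm.le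
      rw [mul_assoc, inv_mul_le_iff₀ hCn]
      calc σ ^ m * cumW w k ≤ ρ * cumW w k := mul_le_mul_of_nonneg_right h4 (hW k).le
        _ ≤ _ := h k hk
        _ ≤ _ := h1
        _ ≤ _ := mul_le_mul_of_nonneg_right h3 (hW _).le
    · have h1 := ih (m - n) (by omega) (k + n) (by omega)
      have h2 : k + n + (m - n) = k + m := by omega
      have h3 : σ ^ m = σ ^ (m - n) * ρ := by rw [← hσn, ← pow_add]; congr 1; omega
      rw [h2] at h1
      have hσp : 0 < σ ^ (m - n) := by positivity
      calc _ = (C ^ n)⁻¹ * σ ^ (m - n) * (ρ * cumW w k) := by rw [h3]; ring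
        _ ≤ (C ^ n)⁻¹ * σ ^ (m - n) * cumW w (k + n) :=
            mul_le_mul_of_nonneg_left (h k hk) (by positivity)
        _ ≤ _ := h1

/-- If `W_{k+m} / W_k ≥ a` for `k ≥ 1`, then `B ^ m` expands the coordinates beyond `m` by the
factor `a`. -/
lemma norm_pow_ge_tail {p : ℝ≥0∞} [Fact (1 ≤ p)] (hp : p ≠ ∞) {w : ℕ → ℝ}
    (hw : ∀ k : ℕ, 1 ≤ k → 0 < w k)
    {B : lp (fun _ : ℕ => ℝ) p →L[ℝ] lp (fun _ : ℕ => ℝ) p}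
    (hB : ∀ (x : lp (fun _ : ℕ => ℝ) p) (n : ℕ), (B x) n = w (n + 1) * x (n + 1))
    {m : ℕ} {a : ℝ} (ha : 0 < a) (h : ∀ k, 1 ≤ k → a * cumW w k ≤ cumW w (k + m))
    (x : lp (fun _ : ℕ => ℝ) p) :
    ‖tailTrunc (m + 1) x‖ * a ≤ ‖(B ^ m) x‖ := by
  have hP := toReal_pos_of_fact hp
  rw [← le_div_iff₀ ha]
  refine lp.norm_le_of_forall_sum_le hP (by positivity) fun s => ?_
  rw [Real.div_rpow (norm_nonneg _) ha.le]
  have hap : 0 < a ^ p.toReal := Real.rpow_pos_of_pos ha _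
  rw [le_div_iff₀ hap]
  set s' := (s.filter fun k => m + 1 ≤ k).image (· - m) with hs'
  refine le_trans ?_ (lp.sum_rpow_le_norm_rpow hP ((B ^ m) x) s')
  rw [hs', Finset.sum_image, Finset.sum_mul, Finset.sum_filter]
  · refine Finset.sum_le_sum fun k _ => ?_
    rw [tailTrunc_apply]
    split_ifs with hk
    · rw [shift_pow_apply hw hB, Nat.sub_add_cancel (by omega),
        ← Real.mul_rpow (norm_nonneg _) ha.le]
      refine Real.rpow_le_rpow (by positivity) ?_ hP.le
      have h1 := h (k - m) (by omega)
      rw [Nat.sub_add_cancel (by omega)] at h1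
      have h2 := cumW_pos hw (k - m)
      rw [norm_mul, norm_mul, norm_inv, Real.norm_of_nonneg h2.le,
        Real.norm_of_nonneg (cumW_pos hw k).le, ← mul_assoc, mul_comm]
      refine mul_le_mul_of_nonneg_right ?_ (norm_nonneg _)
      rw [le_inv_mul_iff₀ h2]
      linarith
    · simp [Real.zero_rpow hP.ne']
  · intro k hk l hl hkl
    simp only [Finset.coe_filter, mem_ofPred_eq] at hk hl
    simp only at hkl
    omega

lemma not_isHypercyclicVector_of_tendsto {X : Type*} [NormedAddCommGroup X]
    [NormedSpace ℝ X] {T : X →L[ℝ] X} {x : X} (hx : x ≠ 0)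
    (h : Tendsto (fun m : ℕ => ‖(T ^ m) x‖) atTop atTop) : ¬ IsHypercyclicVector T x := by
  intro hd
  classical
  have : Nontrivial X := ⟨x, 0, hx⟩
  obtain ⟨M, hM⟩ := eventually_atTop.1 (h.eventually_ge_atTop 1)
  -- A dense set stays dense after removing finitely many points.
  have hd2 := hd.sdiff_finite ((Finset.range M).image fun n => (T ^ n) x).finite_toSet
  obtain ⟨y, hy1, hy2⟩ := hd2.exists_mem_open Metric.isOpen_ball
    ⟨0, Metric.mem_ball_self (show (0 : ℝ) < 1 by norm_num)⟩
  obtain ⟨⟨n, rfl⟩, hn⟩ := hy1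
  rw [mem_ball_zero_iff] at hy2
  rcases lt_or_ge n M with hlt | hge
  · exact hn (Finset.mem_coe.2 (Finset.mem_image.2 ⟨n, Finset.mem_range.2 hlt, rfl⟩))
  · exact (hM n hge).not_gt hy2

/-- The existence of a hypercyclic subspace forces `inf_k ω_{k+1} ⋯ ω_{k+n} ≤ 1` for each `n`. -/
lemma iInf_prod_le_one_of_subspace {p : ℝ≥0∞} [Fact (1 ≤ p)] (hp : p ≠ ∞) {w : ℕ → ℝ}
    (hw : ∀ k : ℕ, 1 ≤ k → 0 < w k) {C : ℝ} (hC1 : 1 ≤ C) (hC : ∀ k : ℕ, 1 ≤ k → w k ≤ C)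
    {B : lp (fun _ : ℕ => ℝ) p →L[ℝ] lp (fun _ : ℕ => ℝ) p}
    (hB : ∀ (x : lp (fun _ : ℕ => ℝ) p) (n : ℕ), (B x) n = w (n + 1) * x (n + 1))
    {Y : Submodule ℝ (lp (fun _ : ℕ => ℝ) p)} (hY : ¬ FiniteDimensional ℝ Y)
    (hYc : IsClosed (Y : Set (lp (fun _ : ℕ => ℝ) p)))
    (hYh : ∀ x ∈ Y, x ≠ 0 → IsHypercyclicVector B x) (n : ℕ) (hn : 1 ≤ n) :
    (⨅ k : ℕ, ∏ j ∈ Finset.Icc 1 n, w (k + 1 + j)) ≤ 1 := by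
  by_contra hcon
  rw [not_le] at hcon
  set ρ := ⨅ k : ℕ, ∏ j ∈ Finset.Icc 1 n, w (k + 1 + j) with hρ
  have hbdd : BddBelow (Set.range fun k : ℕ => ∏ j ∈ Finset.Icc 1 n, w (k + 1 + j)) := by
    refine ⟨0, ?_⟩
    rintro _ ⟨k, rfl⟩
    exact Finset.prod_nonneg fun j _ => (hw _ (by omega)).le
  have h1 : ∀ k, 1 ≤ k → ρ * cumW w k ≤ cumW w (k + n) := by
    intro k hk
    obtain ⟨k, rfl⟩ := Nat.exists_eq_add_of_le' hk
    rw [← prod_shift w (k + 1) n]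
    exact mul_le_mul_of_nonneg_right (ciInf_le hbdd k) (cumW_pos hw _).le
  obtain ⟨c, σ, hc, hσ, h2⟩ := cumW_geometric hw hC1 hC hn hcon h1
  -- Growth by `16` every `M` steps beats the factor `4` lost in the tails of `x`.
  obtain ⟨M, hM⟩ := pow_unbounded_of_one_lt 16 hσ
  have hM0 : 0 < M := by
    rcases Nat.eq_zero_or_pos M with h | h
    · subst h; norm_num at hM
    · exact h
  obtain ⟨x, hxY, hx⟩ := exists_slow_tails hY hYc fun j => (j + 1) * M
  have hx0 : x ≠ 0 := by
    rintro rfl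
    have h3 := (hx 0).trans (norm_tailTrunc_le _ _)
    norm_num at h3
  refine not_isHypercyclicVector_of_tendsto hx0 ?_ (hYh x hxY hx0)
  have hlim : Tendsto (fun m : ℕ => (4 : ℝ) ^ (m / M) * (c * (2 / 3))) atTop atTop :=
    ((tendsto_pow_atTop_atTop_of_one_lt (by norm_num)).comp
      (Nat.tendsto_div_const_atTop hM0.ne')).atTop_mul_const (by positivity)
  refine tendsto_atTop_mono (fun m => ?_) hlim
  have h3 := norm_pow_ge_tail hp hw hB (a := c * σ ^ m) (by positivity) (h2 m) x
  refine le_trans ?_ h3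
  set j := m / M with hj
  have h4 : M * j ≤ m := Nat.mul_div_le m M
  have h5 : m + 1 ≤ (j + 1) * M := by
    have := Nat.lt_mul_div_succ m hM0
    rw [mul_comm]; exact this
  have h6 : ‖tailTrunc ((j + 1) * M) x‖ ≤ ‖tailTrunc (m + 1) x‖ := by
    refine lp.norm_mono (zero_lt_one.trans_le (Fact.out : 1 ≤ p)).ne' fun k => ?_
    rw [tailTrunc_apply, tailTrunc_apply]
    split_ifs <;> first | omega | simp
  have h7 : (16 : ℝ) ^ j ≤ σ ^ m := by
    calc (16 : ℝ) ^ j ≤ (σ ^ M) ^ j := pow_le_pow_left₀ (by norm_num) hM.le _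
      _ = σ ^ (M * j) := (pow_mul _ _ _).symm
      _ ≤ σ ^ m := pow_le_pow_right₀ hσ.le h4
  have h8 : (4 : ℝ) ^ j = (1 / 4) ^ j * 16 ^ j := by rw [← mul_pow]; norm_num
  calc (4 : ℝ) ^ j * (c * (2 / 3)) = ((1 / 4) ^ j * (2 / 3)) * (c * 16 ^ j) := by rw [h8]; ring
    _ ≤ ‖tailTrunc (m + 1) x‖ * (c * σ ^ m) := by
        refine mul_le_mul ((hx j).trans h6) (by gcongr) (by positivity) (norm_nonneg _)

/-! ### Block sequences -/

/-- Since `W` grows slowly on long stretches, there are arbitrarily long backward orbits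
`e_j, B e_j, …, B^M e_j` of uniformly bounded basis vectors. -/
lemma exists_good_index {w : ℕ → ℝ} (hw : ∀ k : ℕ, 1 ≤ k → 0 < w k) {C : ℝ}
    (hC1 : 1 ≤ C) (hC : ∀ k : ℕ, 1 ≤ k → w k ≤ C) (hlim : Tendsto (cumW w) atTop atTop)
    (hinf : ∀ n : ℕ, 1 ≤ n → (⨅ k : ℕ, ∏ j ∈ Finset.Icc 1 n, w (k + 1 + j)) ≤ 1) (M : ℕ) :
    ∃ j, M < j ∧ ∀ m ≤ M, cumW w j ≤ 2 * cumW w (j - m) := by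
  by_contra hcon
  push Not at hcon
  have hW := fun n => cumW_pos hw n
  set σ : ℝ := 2 ^ ((1 : ℝ) / (M + 1)) with hσ
  have hσ1 : 1 < σ := Real.one_lt_rpow (by norm_num) (by positivity)
  have hσM : σ ^ (M + 1) = 2 := by
    rw [hσ, ← Real.rpow_natCast, ← Real.rpow_mul (by norm_num)]
    push_cast
    rw [one_div_mul_cancel (by positivity), Real.rpow_one]
  have hσle : ∀ m ≤ M, σ ^ m ≤ 2 := fun m hm =>
    hσM ▸ pow_le_pow_right₀ hσ1.le (by omega)
  have hCM : 0 < C ^ M := by positivity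
  -- Descending from `k + d` by steps that each halve `W` gives geometric growth above `k`.
  have claim : ∀ d k, M < k → (C ^ M)⁻¹ * σ ^ d * cumW w k ≤ cumW w (k + d) := by
    intro d
    induction d using Nat.strong_induction_on with
    | _ d ih =>
      intro k hk
      obtain ⟨m, hm, hlt⟩ := hcon (k + d) (by omega)
      have hm0 : m ≠ 0 := by
        rintro rfl
        have := hW (k + d)
        rw [Nat.sub_zero] at hlt
        linarith
      rcases le_or_gt m d with hmd | hmd
      · have h1 := ih (d - m) (by omega) k hk
        have h2 : k + (d - m) = k + d - m := by omega
        rw [h2] at h1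
        have h3 : σ ^ d = σ ^ (d - m) * σ ^ m := by rw [← pow_add]; congr 1; omega
        have h4 : 0 ≤ (C ^ M)⁻¹ * σ ^ (d - m) * cumW w k := by
          have := hW k; positivity
        calc (C ^ M)⁻¹ * σ ^ d * cumW w k
            = σ ^ m * ((C ^ M)⁻¹ * σ ^ (d - m) * cumW w k) := by rw [h3]; ring
          _ ≤ 2 * ((C ^ M)⁻¹ * σ ^ (d - m) * cumW w k) :=
              mul_le_mul_of_nonneg_right (hσle m hm) h4
          _ ≤ 2 * cumW w (k + d - m) := by linarith
          _ ≤ _ := hlt.le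
      · have h1 := cumW_add_le hw hC1 hC (k + d - m) (m - d)
        have h2 : k + d - m + (m - d) = k := by omega
        rw [h2] at h1
        have h3 : C ^ (m - d) ≤ C ^ M := pow_le_pow_right₀ hC1 (by omega)
        have h4 : cumW w k ≤ C ^ M * cumW w (k + d - m) :=
          h1.trans (mul_le_mul_of_nonneg_right h3 (hW _).le)
        have h5 : (C ^ M)⁻¹ * cumW w k ≤ cumW w (k + d - m) := by
          rwa [inv_mul_le_iff₀ hCM]
        have h6 : 0 ≤ (C ^ M)⁻¹ * cumW w k := by have := hW k; positivity
        calc (C ^ M)⁻¹ * σ ^ d * cumW w k = σ ^ d * ((C ^ M)⁻¹ * cumW w k) := by ring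
          _ ≤ 2 * ((C ^ M)⁻¹ * cumW w k) :=
              mul_le_mul_of_nonneg_right (hσle d (by omega)) h6
          _ ≤ 2 * cumW w (k + d - m) := by linarith
          _ ≤ _ := hlt.le
  have h1 : ∀ᶠ d : ℕ in atTop, 2 ≤ (C ^ M)⁻¹ * σ ^ d :=
    ((tendsto_pow_atTop_atTop_of_one_lt hσ1).const_mul_atTop (inv_pos.2 hCM)).eventually_ge_atTop 2
  have h2 : ∀ᶠ d : ℕ in atTop, ∀ k ∈ Finset.range (M + 1), 2 * cumW w k ≤ cumW w (k + d) := by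
    rw [Filter.eventually_all_finset]
    intro k _
    exact (hlim.comp (tendsto_atTop_mono (fun d => Nat.le_add_left d k) tendsto_id)).eventually_ge_atTop _
  obtain ⟨d, hd1, hd2, hd3⟩ := (h1.and (h2.and (eventually_ge_atTop 1))).exists
  have h3 : (2 : ℝ) ≤ ⨅ k : ℕ, ∏ j ∈ Finset.Icc 1 d, w (k + 1 + j) := by
    refine le_ciInf fun k => ?_
    refine le_of_mul_le_mul_right ?_ (hW (k + 1))
    rw [prod_shift]
    rcases lt_or_ge (k + 1) (M + 1) with hk | hk
    · exact hd2 _ (Finset.mem_range.2 hk)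
    · exact (mul_le_mul_of_nonneg_right hd1 (hW _).le).trans (claim d (k + 1) (by omega))
  linarith [hinf d hd3]

lemma tendsto_cumW {w : ℕ → ℝ} (hw : ∀ k : ℕ, 1 ≤ k → 0 < w k) {P : ℝ} (hP : 0 < P)
    (hsum : Summable fun n => (cumW w n) ^ (-P)) : Tendsto (cumW w) atTop atTop := by
  refine tendsto_atTop.2 fun b => ?_
  have hb : (0 : ℝ) < max b 1 := by positivity
  filter_upwards [hsum.tendsto_atTop_zero.eventually_lt_const (Real.rpow_pos_of_pos hb (-P))]
    with n hn
  by_contra hcon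
  have h1 : cumW w n ≤ max b 1 := (not_le.1 hcon).le.trans (le_max_left _ _)
  exact hn.not_ge (Real.rpow_le_rpow_of_nonpos (cumW_pos hw n) h1 (by linarith))

/-- The power `W_n ^ (-P)`, as an extended nonnegative number. -/
noncomputable def invPow (w : ℕ → ℝ) (P : ℝ) (n : ℕ) : ℝ≥0∞ := ‖(cumW w n)⁻¹‖ₑ ^ P

lemma tsum_invPow_ne_top {w : ℕ → ℝ} (hw : ∀ k : ℕ, 1 ≤ k → 0 < w k) {P : ℝ} (hP : 0 < P)
    (hsum : Summable fun n => (cumW w n) ^ (-P)) : ∑' n, invPow w P n ≠ ∞ := by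
  have h1 : ∀ n, invPow w P n = ENNReal.ofReal ((cumW w n) ^ (-P)) := fun n => by
    have h := cumW_pos hw n
    rw [invPow, Real.enorm_of_nonneg (inv_nonneg.2 h.le),
      ENNReal.ofReal_rpow_of_nonneg (inv_nonneg.2 h.le) hP.le, Real.inv_rpow h.le,
      Real.rpow_neg h.le]
  simp_rw [h1]
  exact hsum.tsum_ofReal_ne_top

/-- The positions used in the construction. Between `L t` and `L (t + 1)` there is one isolated
position `j t`, followed by a window starting at `s t` and filled with `Λ (s t)` consecutive copies
of a pattern of length `per t`, whose values are bounded by `ht t`. The images of the basis vector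
at `j t` under the powers `B ^ m` with `m ≤ L t` have norm at most `2` (`j_bound`), and the window
lies so far to the right of `L t` that it is negligible under these powers (`s_tail`). -/
structure Blocks (w : ℕ → ℝ) (P : ℝ) (per : ℕ → ℕ) (ht : ℕ → ℝ≥0∞) (Λ : ℕ → ℕ) where
  L : ℕ → ℕ
  j : ℕ → ℕ
  s : ℕ → ℕ
  L_zero : L 0 = 0
  L_lt_j : ∀ t, L t < j t
  j_bound : ∀ t, ∀ m ≤ L t, cumW w (j t) ≤ 2 * cumW w (j t - m)
  j_lt_s : ∀ t, j t < s t
  s_large : ∀ t, (t + 1) * (L t + per t + 2) ≤ s t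
  s_tail : ∀ t, (ht t) ^ P * ∑' n, invPow w P (n + (s t - L t)) ≤ 2⁻¹ ^ t
  L_succ : ∀ t, L (t + 1) = s t + per t * Λ (s t)

lemma Blocks.nonempty {w : ℕ → ℝ} {P : ℝ} (hP : 0 < P) (hsum : ∑' n, invPow w P n ≠ ∞)
    (hj : ∀ M : ℕ, ∃ j, M < j ∧ ∀ m ≤ M, cumW w j ≤ 2 * cumW w (j - m))
    (per : ℕ → ℕ) (ht : ℕ → ℝ≥0∞) (hht : ∀ t, ht t ≠ ∞) (Λ : ℕ → ℕ) :
    Nonempty (Blocks w P per ht Λ) := by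
  choose jf hjf1 hjf2 using hj
  have hs : ∀ t L : ℕ, ∃ s, jf L < s ∧ (t + 1) * (L + per t + 2) ≤ s ∧
      (ht t) ^ P * ∑' n, invPow w P (n + (s - L)) ≤ 2⁻¹ ^ t := by
    intro t L
    have h1 : Tendsto (fun s => (ht t) ^ P * ∑' n, invPow w P (n + (s - L))) atTop (nhds 0) := by
      have h2 := (ENNReal.tendsto_sum_nat_add (invPow w P) hsum).comp (tendsto_sub_atTop_nat L)
      have h3 := ENNReal.Tendsto.const_mul (a := (ht t) ^ P) h2
        (Or.inr (ENNReal.rpow_ne_top_of_nonneg hP.le (hht t)))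
      rwa [mul_zero] at h3
    have h4 : (0 : ℝ≥0∞) < 2⁻¹ ^ t := ENNReal.pow_pos (by simp) t
    obtain ⟨s, h5, h6, h7⟩ := ((eventually_gt_atTop (jf L)).and
      ((eventually_ge_atTop ((t + 1) * (L + per t + 2))).and (h1.eventually_le_const h4))).exists
    exact ⟨s, h5, h6, h7⟩
  choose sf hsf1 hsf2 hsf3 using hs
  obtain ⟨L, hL0, hL⟩ : ∃ L : ℕ → ℕ, L 0 = 0 ∧ ∀ t, L (t + 1) = sf t (L t) + per t * Λ (sf t (L t)) :=
    ⟨fun t => Nat.rec 0 (fun t L => sf t L + per t * Λ (sf t L)) t, rfl, fun _ => rfl⟩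
  exact ⟨⟨L, fun t => jf (L t), fun t => sf t (L t), hL0, fun t => hjf1 _, fun t => hjf2 _,
    fun t => hsf1 _ _, fun t => hsf2 _ _, fun t => hsf3 _ _, hL⟩⟩

namespace Blocks

variable {w : ℕ → ℝ} {P : ℝ} {per : ℕ → ℕ} {ht : ℕ → ℝ≥0∞} {Λ : ℕ → ℕ}
  (D : Blocks w P per ht Λ)

lemma L_strictMono : StrictMono D.L :=
  strictMono_nat_of_lt_succ fun t => by
    have h1 := D.L_lt_j t
    have h2 := D.j_lt_s t
    have h3 := D.L_succ t
    omega

lemma s_le_L_succ (t : ℕ) : D.s t ≤ D.L (t + 1) := by rw [D.L_succ]; omega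

lemma exists_block (k : ℕ) : ∃ t, D.L t ≤ k ∧ k < D.L (t + 1) := by
  have h : ∃ t, k < D.L (t + 1) := ⟨k, (Nat.lt_succ_self k).trans_le (D.L_strictMono.le_apply)⟩
  classical
  refine ⟨Nat.find h, ?_, Nat.find_spec h⟩
  rcases h0 : Nat.find h with _ | t
  · rw [D.L_zero]; omega
  · exact not_lt.1 (Nat.find_min h (m := t) (by omega))

lemma block_unique {k t t' : ℕ} (h1 : D.L t ≤ k) (h2 : k < D.L (t + 1)) (h3 : D.L t' ≤ k)
    (h4 : k < D.L (t' + 1)) : t = t' := by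
  have a := D.L_strictMono.lt_iff_lt.1 (h1.trans_lt h4)
  have b := D.L_strictMono.lt_iff_lt.1 (h3.trans_lt h2)
  omega

/-- The index of the block containing position `k`. -/
noncomputable def idx (k : ℕ) : ℕ := (D.exists_block k).choose

lemma idx_eq {k t : ℕ} (h1 : D.L t ≤ k) (h2 : k < D.L (t + 1)) : D.idx k = t :=
  D.block_unique (D.exists_block k).choose_spec.1 (D.exists_block k).choose_spec.2 h1 h2

lemma j_lt_L_succ (t : ℕ) : D.j t < D.L (t + 1) := (D.j_lt_s t).trans_le (D.s_le_L_succ t)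

lemma j_injective : Function.Injective D.j := fun a b h =>
  D.block_unique (k := D.j a) (D.L_lt_j a).le (D.j_lt_L_succ a) (h ▸ (D.L_lt_j b).le)
    (h ▸ D.j_lt_L_succ b)

/-- `x` is a block sequence: it vanishes outside the isolated positions and the windows, and on the
`t`-th window `W x` is a periodic repetition of the `t`-th pattern, scaled by the value of `x` at the
isolated position `j (gen t)`. -/
def Rel (gen : ℕ → ℕ) (pat : ℕ → ℕ → ℝ) (x : ℕ → ℝ) : Prop :=
  (∀ t k, D.L t ≤ k → k < D.s t → k ≠ D.j t → x k = 0) ∧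
  ∀ t k, D.s t ≤ k → k < D.L (t + 1) →
    cumW w k * x k = x (D.j (gen t)) * pat t ((k - D.s t) % per t)

lemma tsum_ite_ge (f : ℕ → ℝ≥0∞) (K : ℕ) :
    ∑' n, (if K ≤ n then f n else 0) = ∑' n, f (n + K) := by
  rw [← Summable.sum_add_tsum_nat_add' (k := K) ENNReal.summable]
  rw [Finset.sum_eq_zero, zero_add]
  · simp
  · intro i hi
    rw [if_neg (by simpa using hi)]

variable {D} {gen : ℕ → ℕ} {pat : ℕ → ℕ → ℝ} {x : ℕ → ℝ}

/-- The coordinate `n` of `B ^ m x`, when `k = n + m` lies in a window. -/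
lemma Rel.window_le (hP : 0 < P) (hx : D.Rel gen pat x) (hpat : ∀ t k, ‖pat t k‖ₑ ≤ ht t)
    {A : ℝ≥0∞} (hA : ∀ t, ‖x (D.j t)‖ₑ ≤ A) {t k : ℕ} (h1 : D.s t ≤ k) (h2 : k < D.L (t + 1))
    (n : ℕ) :
    ‖(cumW w n)⁻¹ * (cumW w k * x k)‖ₑ ^ P ≤ A ^ P * ht t ^ P * invPow w P n := by
  rw [hx.2 t k h1 h2, invPow, enorm_mul, enorm_mul, ENNReal.mul_rpow_of_nonneg _ _ hP.le,
    ENNReal.mul_rpow_of_nonneg _ _ hP.le, mul_comm]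
  gcongr
  · exact hA _
  · exact hpat _ _

/-- The part of `B ^ m x`, `m ≤ L t`, coming from the blocks with index at least `t`. -/
lemma Rel.tail_le (hw : ∀ k : ℕ, 1 ≤ k → 0 < w k) (hP : 0 < P) (hx : D.Rel gen pat x)
    (hpat : ∀ t k, ‖pat t k‖ₑ ≤ ht t)
    {A : ℝ≥0∞} (hA : ∀ t, ‖x (D.j t)‖ₑ ≤ A) {t m : ℕ} (hm : m ≤ D.L t) :
    ∑' n, (if D.L t ≤ n + m then ‖(cumW w n)⁻¹ * (cumW w (n + m) * x (n + m))‖ₑ ^ P else 0) ≤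
      ∑' k, (2 ^ P * ‖x (D.j (k + t))‖ₑ ^ P + A ^ P * 2⁻¹ ^ (k + t)) := by
  -- `G k` dominates the contribution of block `k + t`: its isolated position and its window.
  set G : ℕ → ℕ → ℝ≥0∞ := fun k n =>
    (if n = D.j (k + t) - m then 2 ^ P * ‖x (D.j (k + t))‖ₑ ^ P else 0) +
      (if D.s (k + t) - D.L (k + t) ≤ n then A ^ P * ht (k + t) ^ P * invPow w P n else 0) with hG
  calc _ ≤ ∑' n, ∑' k, G k n := by
        refine ENNReal.tsum_le_tsum fun n => ?_
        split_ifs with hn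
        swap
        · exact zero_le
        obtain ⟨t', h1, h2⟩ := D.exists_block (n + m)
        have htt : t ≤ t' := by
          have := D.L_strictMono.lt_iff_lt.1 (hn.trans_lt h2)
          omega
        obtain ⟨k, rfl⟩ := Nat.exists_eq_add_of_le' htt
        have hmL : m ≤ D.L (k + t) := hm.trans (D.L_strictMono.monotone htt)
        refine le_trans ?_ (ENNReal.le_tsum k)
        simp only [hG]
        rcases lt_or_ge (n + m) (D.s (k + t)) with h3 | h3
        · by_cases h4 : n + m = D.j (k + t)
          · rw [if_pos (by omega)]
            refine le_trans ?_ le_self_add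
            rw [← ENNReal.mul_rpow_of_nonneg _ _ hP.le, h4]
            gcongr
            have h5 := D.j_bound (k + t) m hmL
            have h6 : D.j (k + t) - m = n := by omega
            rw [h6] at h5
            have h7 := cumW_pos hw n
            rw [← mul_assoc, enorm_mul]
            gcongr
            rw [Real.enorm_of_nonneg (mul_nonneg (inv_nonneg.2 h7.le) (cumW_pos hw _).le)]
            refine ENNReal.ofReal_le_of_le_toReal ?_
            rw [ENNReal.toReal_ofNat, inv_mul_le_iff₀ h7]
            linarith
          · rw [hx.1 (k + t) (n + m) h1 h3 h4]
            simp [hP]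
        · rw [if_pos (c := D.s (k + t) - D.L (k + t) ≤ n) (by omega)]
          exact (hx.window_le hP hpat hA h3 h2 n).trans le_add_self
    _ = ∑' k, ∑' n, G k n := ENNReal.tsum_comm
    _ ≤ _ := by
        refine ENNReal.tsum_le_tsum fun k => ?_
        simp only [hG]
        rw [ENNReal.tsum_add, tsum_ite_eq, tsum_ite_ge, ENNReal.tsum_mul_left, mul_assoc]
        gcongr
        exact D.s_tail (k + t)

/-- At the hitting times in the `t`-th window, `B ^ m x` is close to a multiple of the `t`-th
pattern. -/
lemma Rel.hit_le (hw : ∀ k : ℕ, 1 ≤ k → 0 < w k) (hP : 0 < P) (hx : D.Rel gen pat x)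
    (hpat : ∀ t k, ‖pat t k‖ₑ ≤ ht t)
    {A : ℝ≥0∞} (hA : ∀ t, ‖x (D.j t)‖ₑ ≤ A) {t l : ℕ} (hl : l < Λ (D.s t)) :
    ∑' n, ‖(cumW w n)⁻¹ * (cumW w (n + (D.s t + per t * l)) * x (n + (D.s t + per t * l))) -
        (cumW w n)⁻¹ * (x (D.j (gen t)) * if n < per t then pat t n else 0)‖ₑ ^ P ≤
      A ^ P * ht t ^ P * (∑' n, invPow w P (n + per t)) +
      ∑' k, (2 ^ P * ‖x (D.j (k + (t + 1)))‖ₑ ^ P + A ^ P * 2⁻¹ ^ (k + (t + 1))) := by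
  set m := D.s t + per t * l with hm
  have hmL : m + per t ≤ D.L (t + 1) := by
    have h1 : per t * (l + 1) ≤ per t * Λ (D.s t) := Nat.mul_le_mul_left _ hl
    have h2 := D.L_succ t
    rw [mul_add] at h1
    omega
  refine le_trans ?_ (add_le_add_right (hx.tail_le hw hP hpat hA (t := t + 1) (m := m)
    (by omega)) _)
  rw [← ENNReal.tsum_mul_left, ← tsum_ite_ge (fun n => A ^ P * ht t ^ P * invPow w P n),
    ← ENNReal.tsum_add]
  refine ENNReal.tsum_le_tsum fun n => ?_
  rcases lt_or_ge (n + m) (D.L (t + 1)) with h1 | h1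
  · rcases lt_or_ge n (per t) with h2 | h2
    · have h3 := hx.2 t (n + m) (by omega) h1
      have h4 : (n + m - D.s t) % per t = n := by
        have : n + m - D.s t = n + per t * l := by omega
        rw [this, Nat.add_mul_mod_self_left, Nat.mod_eq_of_lt h2]
      rw [if_pos h2, h3, h4, sub_self, enorm_zero, ENNReal.zero_rpow_of_pos hP]
      exact zero_le
    · rw [if_neg (not_lt.2 h2), if_pos h2, mul_zero, mul_zero, sub_zero]
      exact (hx.window_le hP hpat hA (by omega) h1 n).trans le_self_add
  · rw [if_neg (c := n < per t) (by omega), if_pos h1, mul_zero, mul_zero, sub_zero]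
    exact le_add_self

/-- Before its window, a block contains a single isolated nonzero coordinate. -/
lemma Rel.gap (hx : D.Rel gen pat x) {t m : ℕ} (h1 : D.L t ≤ m) (h2 : m + 1 < D.s t) :
    x m = 0 ∨ x (m + 1) = 0 := by
  by_cases h : m = D.j t
  · exact Or.inr (hx.1 t _ (by omega) h2 (by omega))
  · exact Or.inl (hx.1 t _ h1 (by omega) h)

end Blocks

/-! ### The subspace of block sequences -/

section Subspace

variable {w : ℕ → ℝ} {per : ℕ → ℕ} {ht : ℕ → ℝ≥0∞} {Λ : ℕ → ℕ}

/-- The block sequence generated by the basis vector at the isolated position `j i`. -/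
noncomputable def blockVec {P : ℝ} (D : Blocks w P per ht Λ) (gen : ℕ → ℕ) (pat : ℕ → ℕ → ℝ) (i k : ℕ) : ℝ :=
  if k = D.j (D.idx k) then (if D.idx k = i then 1 else 0)
  else if k < D.s (D.idx k) then 0
  else if gen (D.idx k) = i then
    (cumW w k)⁻¹ * pat (D.idx k) ((k - D.s (D.idx k)) % per (D.idx k))
  else 0

lemma blockVec_j {P : ℝ} (D : Blocks w P per ht Λ) (gen : ℕ → ℕ) (pat : ℕ → ℕ → ℝ) (i t : ℕ) : blockVec D gen pat i (D.j t) = if t = i then 1 else 0 := by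
  have h := D.idx_eq (D.L_lt_j t).le (D.j_lt_L_succ t)
  rw [blockVec, h, if_pos rfl]

lemma blockVec_rel {P : ℝ} (D : Blocks w P per ht Λ) (gen : ℕ → ℕ) (pat : ℕ → ℕ → ℝ)
    (hw : ∀ k : ℕ, 1 ≤ k → 0 < w k)
    (i : ℕ) :
    D.Rel gen pat (blockVec D gen pat i) := by
  refine ⟨fun t k h1 h2 h3 => ?_, fun t k h1 h2 => ?_⟩
  · have h := D.idx_eq h1 (h2.trans_le (D.s_le_L_succ t))
    rw [blockVec, h, if_neg h3, if_pos h2]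
  · have h := D.idx_eq (((D.L_lt_j t).trans (D.j_lt_s t)).le.trans h1) h2
    have h3 : k ≠ D.j t := ((D.j_lt_s t).trans_le h1).ne'
    rw [blockVec_j, blockVec, h, if_neg h3, if_neg (not_lt.2 h1)]
    split_ifs
    · rw [← mul_assoc, mul_inv_cancel₀ (cumW_pos hw k).ne']
    · simp

/-- The subspace of all block sequences in `ℓ_p`. -/
def blockSubspace {p : ℝ≥0∞} [Fact (1 ≤ p)] (D : Blocks w p.toReal per ht Λ) (gen : ℕ → ℕ)
    (pat : ℕ → ℕ → ℝ) : Submodule ℝ (lp (fun _ : ℕ => ℝ) p) where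
  carrier := {x | D.Rel gen pat x}
  zero_mem' := ⟨fun _ _ _ _ _ => rfl, fun t k _ _ => by simp⟩
  add_mem' {x y} hx hy := by
    refine ⟨fun t k h1 h2 h3 => ?_, fun t k h1 h2 => ?_⟩
    · have a := hx.1 t k h1 h2 h3
      have b := hy.1 t k h1 h2 h3
      rw [lp.coeFn_add, Pi.add_apply, a, b, add_zero]
    · have a := hx.2 t k h1 h2
      have b := hy.2 t k h1 h2
      rw [lp.coeFn_add, Pi.add_apply, Pi.add_apply, mul_add, a, b, add_mul]
  smul_mem' c x hx := by
    refine ⟨fun t k h1 h2 h3 => ?_, fun t k h1 h2 => ?_⟩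
    · have a := hx.1 t k h1 h2 h3
      rw [lp.coeFn_smul, Pi.smul_apply, a, smul_zero]
    · have a := hx.2 t k h1 h2
      rw [lp.coeFn_smul, Pi.smul_apply, Pi.smul_apply, smul_eq_mul, smul_eq_mul, mul_left_comm, a,
        mul_assoc]

variable {p : ℝ≥0∞} [Fact (1 ≤ p)] (D : Blocks w p.toReal per ht Λ) {gen : ℕ → ℕ}
  {pat : ℕ → ℕ → ℝ}

lemma mem_blockSubspace {x : lp (fun _ : ℕ => ℝ) p} :
    x ∈ blockSubspace D gen pat ↔ D.Rel gen pat x := Iff.rfl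

lemma continuous_coord (k : ℕ) : Continuous fun y : lp (fun _ : ℕ => ℝ) p => y k :=
  (lp.lipschitzWith_one_eval (E := fun _ : ℕ => ℝ) p k).continuous

lemma isClosed_blockSubspace :
    IsClosed (blockSubspace D gen pat : Set (lp (fun _ : ℕ => ℝ) p)) := by
  have h : (blockSubspace D gen pat : Set (lp (fun _ : ℕ => ℝ) p)) =
      {x : lp (fun _ : ℕ => ℝ) p | D.Rel gen pat x} := rfl
  rw [h]
  simp only [Blocks.Rel, ofPred_and, ofPred_forall]
  refine IsClosed.inter ?_ ?_
  · refine isClosed_iInter fun t => isClosed_iInter fun k => isClosed_iInter fun _ =>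
      isClosed_iInter fun _ => isClosed_iInter fun _ => ?_
    exact isClosed_eq (continuous_coord k) continuous_const
  · refine isClosed_iInter fun t => isClosed_iInter fun k => isClosed_iInter fun _ =>
      isClosed_iInter fun _ => ?_
    exact isClosed_eq (continuous_const.mul (continuous_coord k))
      ((continuous_coord _).mul continuous_const)

lemma blockVec_memℓp (hp : p ≠ ∞) (hw : ∀ k : ℕ, 1 ≤ k → 0 < w k)
    (hpat : ∀ t k, ‖pat t k‖ₑ ≤ ht t) (i : ℕ) : Memℓp (blockVec D gen pat i) p := by
  have hP := toReal_pos_of_fact hp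
  have hA : ∀ t, ‖blockVec D gen pat i (D.j t)‖ₑ ≤ 1 := fun t => by
    rw [blockVec_j]
    split_ifs <;> simp
  have h := (blockVec_rel D gen pat hw i).tail_le hw hP hpat hA (t := 0) (m := 0) (Nat.zero_le _)
  have h2 : ∑' n, ‖blockVec D gen pat i n‖ₑ ^ p.toReal ≠ ∞ := by
    have hl : ∀ n, ‖blockVec D gen pat i n‖ₑ ^ p.toReal =
        if D.L 0 ≤ n + 0 then ‖(cumW w n)⁻¹ * (cumW w (n + 0) *
          blockVec D gen pat i (n + 0))‖ₑ ^ p.toReal else 0 := fun n => by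
      rw [D.L_zero, if_pos (Nat.zero_le _), add_zero, inv_mul_cancel_left₀ (cumW_pos hw n).ne']
    rw [tsum_congr hl]
    refine ne_top_of_le_ne_top ?_ h
    rw [ENNReal.tsum_add, ENNReal.tsum_mul_left, ENNReal.tsum_mul_left]
    refine ENNReal.add_ne_top.2 ⟨ENNReal.mul_ne_top ?_ ?_, ENNReal.mul_ne_top ?_ ?_⟩
    · exact ENNReal.rpow_ne_top_of_nonneg hP.le (by simp)
    · rw [tsum_eq_single i]
      · rw [add_zero, blockVec_j, if_pos rfl]; simp
      · intro k hk
        rw [add_zero, blockVec_j, if_neg hk, enorm_zero, ENNReal.zero_rpow_of_pos hP]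
    · simp
    · simp
  refine memℓp_gen ?_
  have h3 : ∀ n, ‖blockVec D gen pat i n‖ₑ ^ p.toReal =
      ENNReal.ofReal (‖blockVec D gen pat i n‖ ^ p.toReal) := fun n => by
    rw [← ofReal_norm, ENNReal.ofReal_rpow_of_nonneg (norm_nonneg _) hP.le]
  rw [tsum_congr h3] at h2
  have h4 := ENNReal.summable_toReal h2
  refine h4.congr fun n => ?_
  rw [ENNReal.toReal_ofReal (by positivity)]

/-- The vector `blockVec` as an element of the subspace of block sequences. -/
noncomputable def blockElt (gen : ℕ → ℕ) (pat : ℕ → ℕ → ℝ) (hp : p ≠ ∞)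
    (hw : ∀ k : ℕ, 1 ≤ k → 0 < w k)
    (hpat : ∀ t k, ‖pat t k‖ₑ ≤ ht t) (i : ℕ) : blockSubspace (p := p) D gen pat :=
  ⟨⟨blockVec D gen pat i, blockVec_memℓp D hp hw hpat i⟩, blockVec_rel D gen pat hw i⟩

lemma not_finiteDimensional_blockSubspace (hp : p ≠ ∞) (hw : ∀ k : ℕ, 1 ≤ k → 0 < w k)
    (hpat : ∀ t k, ‖pat t k‖ₑ ≤ ht t) :
    ¬ FiniteDimensional ℝ (blockSubspace (p := p) D gen pat) := by
  intro hfin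
  have hli : LinearIndependent ℝ (blockElt D gen pat hp hw hpat) := by
    rw [linearIndependent_iff']
    intro S g hg i hi
    -- Read off the coordinate at the isolated position `j i`.
    let φ : blockSubspace (p := p) D gen pat →ₗ[ℝ] ℝ :=
      { toFun := fun y => (y : lp (fun _ : ℕ => ℝ) p) (D.j i)
        map_add' := fun a b => by simp
        map_smul' := fun a b => by simp }
    have h1 : ∀ i', φ (blockElt D gen pat hp hw hpat i') = if i = i' then 1 else 0 :=
      fun i' => blockVec_j D gen pat i' i
    have h2 := congrArg φ hg
    rw [map_sum, map_zero] at h2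
    simp only [map_smul, h1, smul_eq_mul, mul_ite, mul_one, mul_zero] at h2
    rw [Finset.sum_ite_eq, if_pos hi] at h2
    exact h2
  exact not_finite_iff_infinite.2 (inferInstanceAs (Infinite ℕ)) hli.finite

end Subspace

/-! ### Targets -/

/-- The enumeration of all triples `(i, q, z)` used in the construction; every triple appears
infinitely often. -/
noncomputable def target (t : ℕ) : ℕ × ℕ × (ℕ →₀ ℚ) :=
  (exists_surjective_nat (ℕ × ℕ × (ℕ →₀ ℚ))).choose (Nat.unpair t).1

lemma frequently_target (a : ℕ × ℕ × (ℕ →₀ ℚ)) : ∃ᶠ t in atTop, target t = a := by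
  obtain ⟨b, hb⟩ := (exists_surjective_nat (ℕ × ℕ × (ℕ →₀ ℚ))).choose_spec a
  refine frequently_atTop.2 fun n => ⟨Nat.pair b n, Nat.right_le_pair b n, ?_⟩
  rw [target, Nat.unpair_pair, hb]

/-- The index of the isolated position controlling the `t`-th window. -/
noncomputable def tGen (t : ℕ) : ℕ := (target t).1

/-- The length of the `t`-th pattern; it is at least `1`. -/
noncomputable def tPer (t : ℕ) : ℕ := (target t).2.1 + 1

/-- The `t`-th pattern. -/
noncomputable def tPat (t n : ℕ) : ℝ := ((target t).2.2 n : ℝ)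

/-- A bound for the values of a finitely supported sequence: the sum of their absolute values. -/
noncomputable def height (z : ℕ →₀ ℚ) : ℝ≥0∞ := ∑ n ∈ z.support, ‖(z n : ℝ)‖ₑ

lemma height_ne_top (z : ℕ →₀ ℚ) : height z ≠ ∞ :=
  ENNReal.sum_ne_top.2 fun _ _ => enorm_ne_top

lemma le_height (z : ℕ →₀ ℚ) (n : ℕ) : ‖(z n : ℝ)‖ₑ ≤ height z := by
  by_cases h : n ∈ z.support
  · exact Finset.single_le_sum (f := fun n => ‖(z n : ℝ)‖ₑ) (fun _ _ => zero_le) h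
  · rw [Finsupp.notMem_support_iff.1 h]
    simp

/-- The bound for the values of the `t`-th pattern. -/
noncomputable def tHt (t : ℕ) : ℝ≥0∞ := height (target t).2.2

lemma tPat_le (t k : ℕ) : ‖tPat t k‖ₑ ≤ tHt t := le_height _ _

lemma lp_norm_le_of_tsum_enorm {p : ℝ≥0∞} [Fact (1 ≤ p)] (hp : p ≠ ∞)
    (x : lp (fun _ : ℕ => ℝ) p) {ε : ℝ} (hε : 0 ≤ ε)
    (h : ∑' n, ‖x n‖ₑ ^ p.toReal ≤ ENNReal.ofReal (ε ^ p.toReal)) : ‖x‖ ≤ ε := by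
  have hP := toReal_pos_of_fact hp
  refine lp.norm_le_of_forall_sum_le hP hε fun S => ?_
  have h1 := (ENNReal.sum_le_tsum S).trans h
  have h3 : ∀ n, ‖x n‖ₑ ^ p.toReal = ENNReal.ofReal (‖x n‖ ^ p.toReal) := fun n => by
    rw [← ofReal_norm, ENNReal.ofReal_rpow_of_nonneg (norm_nonneg _) hP.le]
  simp_rw [h3] at h1
  rw [← ENNReal.ofReal_sum_of_nonneg (fun _ _ => by positivity)] at h1
  exact (ENNReal.ofReal_le_ofReal_iff (by positivity)).1 h1

lemma tsum_enorm_ne_top {p : ℝ≥0∞} [Fact (1 ≤ p)] (hp : p ≠ ∞)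
    (x : lp (fun _ : ℕ => ℝ) p) : ∑' n, ‖x n‖ₑ ^ p.toReal ≠ ∞ := by
  have hP := toReal_pos_of_fact hp
  have h3 : ∀ n, ‖x n‖ₑ ^ p.toReal = ENNReal.ofReal (‖x n‖ ^ p.toReal) := fun n => by
    rw [← ofReal_norm, ENNReal.ofReal_rpow_of_nonneg (norm_nonneg _) hP.le]
  simp_rw [h3]
  exact ((lp.memℓp x).summable hP).tsum_ofReal_ne_top

/-- The vectors `(a zₙ / Wₙ)ₙ`, with `z` rational and finitely supported, are dense in `ℓ_p`. -/
lemma exists_target_approx {p : ℝ≥0∞} [hp1 : Fact (1 ≤ p)] (hp : p ≠ ∞) {w : ℕ → ℝ}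
    (hw : ∀ k : ℕ, 1 ≤ k → 0 < w k) {a : ℝ} (ha : a ≠ 0) (y : lp (fun _ : ℕ => ℝ) p)
    {ε : ℝ} (hε : 0 < ε) :
    ∃ (z : ℕ →₀ ℚ) (y' : lp (fun _ : ℕ => ℝ) p), (∀ n, y' n = (cumW w n)⁻¹ * (a * z n)) ∧
      ‖y - y'‖ < ε := by
  have h0 : 0 < p := zero_lt_one.trans_le hp1.out
  have h1 := (Metric.tendsto_nhds.1 (lp.hasSum_single hp y) (ε / 2) (by positivity)).exists
  obtain ⟨F, hF⟩ := h1
  set η : ℝ := ε / (2 * (F.card + 1)) with hη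
  have hη0 : 0 < η := by positivity
  have hz : ∀ n, ∃ r : ℚ, |y n - (cumW w n)⁻¹ * (a * r)| < η := fun n => by
    have hc : (cumW w n)⁻¹ * a ≠ 0 := mul_ne_zero (inv_ne_zero (cumW_pos hw n).ne') ha
    obtain ⟨r, hr⟩ := exists_rat_near (y n / ((cumW w n)⁻¹ * a)) (div_pos hη0 (abs_pos.2 hc))
    refine ⟨r, ?_⟩
    rw [lt_div_iff₀ (abs_pos.2 hc), ← abs_mul, sub_mul, div_mul_cancel₀ _ hc] at hr
    rwa [show (cumW w n)⁻¹ * (a * r) = r * ((cumW w n)⁻¹ * a) by ring]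
  choose zf hzf using hz
  set z : ℕ →₀ ℚ := Finsupp.onFinset F (fun n => if n ∈ F then zf n else 0)
    (fun n hn => by by_contra h; simp [h] at hn) with hzdef
  refine ⟨z, ∑ n ∈ F, lp.single p n ((cumW w n)⁻¹ * (a * z n)), fun n => ?_, ?_⟩
  · rw [lp.coeFn_sum, Finset.sum_apply]
    simp only [lp.single_apply, Pi.single_apply]
    rw [Finset.sum_ite_eq]
    split_ifs with h
    · rfl
    · simp [hzdef, h]
  · have h2 : ‖∑ n ∈ F, lp.single p n (y n) -
        ∑ n ∈ F, lp.single p n ((cumW w n)⁻¹ * (a * z n))‖ ≤ F.card * η := by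
      rw [← Finset.sum_sub_distrib, ← nsmul_eq_mul]
      refine (norm_sum_le _ _).trans (Finset.sum_le_card_nsmul _ _ _ fun n hn => ?_)
      rw [← lp.single_sub, lp.norm_single h0, Real.norm_eq_abs]
      have h4 : z n = zf n := by simp [hzdef, hn]
      rw [h4]
      exact (hzf n).le
    have h3 : F.card * η ≤ ε / 2 := by
      rw [hη, mul_div_assoc', div_le_div_iff₀ (by positivity) (by norm_num)]
      nlinarith
    rw [dist_eq_norm, norm_sub_rev] at hF
    calc _ ≤ _ := norm_sub_le_norm_sub_add_norm_sub y (∑ n ∈ F, lp.single p n (y n)) _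
      _ < ε := by linarith

/-! ### Visits of the orbits of block sequences -/

/-- A block sequence is determined by its values at the isolated positions. -/
lemma Blocks.Rel.exists_ne_zero {w : ℕ → ℝ} (hw : ∀ k : ℕ, 1 ≤ k → 0 < w k) {P : ℝ}
    {per : ℕ → ℕ} {ht : ℕ → ℝ≥0∞} {Λ : ℕ → ℕ} {D : Blocks w P per ht Λ} {gen : ℕ → ℕ}
    {pat : ℕ → ℕ → ℝ} {x : ℕ → ℝ} (hx : D.Rel gen pat x) (hx0 : x ≠ 0) : ∃ i, x (D.j i) ≠ 0 := by
  by_contra! hcon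
  refine hx0 (funext fun k => ?_)
  obtain ⟨t, h1, h2⟩ := D.exists_block k
  rcases lt_or_ge k (D.s t) with h3 | h3
  · by_cases h4 : k = D.j t
    · rw [h4]; exact hcon t
    · exact hx.1 t k h1 h3 h4
  · have h5 := hx.2 t k h3 h2
    rw [hcon, zero_mul] at h5
    exact (mul_eq_zero.1 h5).resolve_left (cumW_pos hw k).ne'

/-- Every nonzero block sequence visits a given open set at all the times `s t + q l`,
`l < Λ (s t)`, for infinitely many windows `t` with pattern length `q`. -/
lemma frequently_hits {p : ℝ≥0∞} [Fact (1 ≤ p)] (hp : p ≠ ∞) {w : ℕ → ℝ}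
    (hw : ∀ k : ℕ, 1 ≤ k → 0 < w k) {Λ : ℕ → ℕ} (D : Blocks w p.toReal tPer tHt Λ)
    (hsum : ∑' n, invPow w p.toReal n ≠ ∞)
    {B : lp (fun _ : ℕ => ℝ) p →L[ℝ] lp (fun _ : ℕ => ℝ) p}
    (hB : ∀ (x : lp (fun _ : ℕ => ℝ) p) (n : ℕ), (B x) n = w (n + 1) * x (n + 1))
    {x : lp (fun _ : ℕ => ℝ) p} (hx : x ∈ blockSubspace D tGen tPat) (hx0 : x ≠ 0)
    {U : Set (lp (fun _ : ℕ => ℝ) p)} (hU : IsOpen U) (hne : U.Nonempty) :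
    ∃ q : ℕ, 1 ≤ q ∧ ∃ᶠ t in atTop, tPer t = q ∧
      ∀ l < Λ (D.s t), (B ^ (D.s t + q * l)) x ∈ U := by
  have hP := toReal_pos_of_fact hp
  have hrel : D.Rel tGen tPat x := hx
  obtain ⟨i, hi⟩ := hrel.exists_ne_zero hw (fun h => hx0 (lp.ext h))
  obtain ⟨y, hy⟩ := hne
  obtain ⟨ε, hε, hball⟩ := Metric.isOpen_iff.1 hU y hy
  obtain ⟨z, y', hy', hyy'⟩ := exists_target_approx hp hw hi y (half_pos hε)
  have hp1 : p ≠ 0 := (zero_lt_one.trans_le (Fact.out : 1 ≤ p)).ne'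
  set A : ℝ≥0∞ := ‖x‖ₑ with hAdef
  have hAtop : A ^ p.toReal ≠ ∞ := ENNReal.rpow_ne_top_of_nonneg hP.le enorm_ne_top
  have hA : ∀ t, ‖x (D.j t)‖ₑ ≤ A := fun t => by
    rw [hAdef, ← ofReal_norm, ← ofReal_norm]
    exact ENNReal.ofReal_le_ofReal (lp.norm_apply_le_norm hp1 x _)
  set δ : ℝ≥0∞ := ENNReal.ofReal ((ε / 2) ^ p.toReal) / 2 with hδ
  have hδ0 : 0 < δ := ENNReal.half_pos (ENNReal.ofReal_pos.2 (by positivity)).ne'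
  -- The pattern length is taken so large that the later copies of the pattern are negligible
  -- when one copy is moved to the beginning.
  obtain ⟨q, hq1, hq2⟩ : ∃ q : ℕ, (∀ n, z n ≠ 0 → n < q + 1) ∧
      A ^ p.toReal * height z ^ p.toReal * (∑' n, invPow w p.toReal (n + (q + 1))) ≤ δ := by
    have h1 : Tendsto (fun q => A ^ p.toReal * height z ^ p.toReal *
        ∑' n, invPow w p.toReal (n + (q + 1))) atTop (nhds 0) := by
      have h2 := (ENNReal.tendsto_sum_nat_add (invPow w p.toReal) hsum).comp (tendsto_add_atTop_nat 1)
      have h3 := ENNReal.Tendsto.const_mul (a := A ^ p.toReal * height z ^ p.toReal) h2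
        (Or.inr (ENNReal.mul_ne_top hAtop (ENNReal.rpow_ne_top_of_nonneg hP.le (height_ne_top z))))
      rwa [mul_zero] at h3
    obtain ⟨q, h4, h5⟩ := ((h1.eventually_le_const hδ0).and
      (eventually_ge_atTop (z.support.sup id))).exists
    refine ⟨q, fun n hn => ?_, h4⟩
    have : n ≤ z.support.sup id := Finset.le_sup (f := id) (Finsupp.mem_support_iff.2 hn)
    omega
  have hev : ∀ᶠ t in atTop, ∑' k, (2 ^ p.toReal * ‖x (D.j (k + (t + 1)))‖ₑ ^ p.toReal +
      A ^ p.toReal * 2⁻¹ ^ (k + (t + 1))) ≤ δ := by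
    set f : ℕ → ℝ≥0∞ := fun k => 2 ^ p.toReal * ‖x (D.j k)‖ₑ ^ p.toReal +
      A ^ p.toReal * 2⁻¹ ^ k with hf
    have h1 : ∑' k, f k ≠ ∞ := by
      rw [hf, ENNReal.tsum_add, ENNReal.tsum_mul_left, ENNReal.tsum_mul_left]
      refine ENNReal.add_ne_top.2 ⟨ENNReal.mul_ne_top ?_ ?_, ENNReal.mul_ne_top hAtop (by simp)⟩
      · exact ENNReal.rpow_ne_top_of_nonneg hP.le (by simp)
      · exact ne_top_of_le_ne_top (tsum_enorm_ne_top hp x)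
          (ENNReal.tsum_comp_le_tsum_of_injective D.j_injective fun n => ‖x n‖ₑ ^ p.toReal)
    exact ((ENNReal.tendsto_sum_nat_add f h1).comp
      (tendsto_add_atTop_nat 1)).eventually_le_const hδ0
  refine ⟨q + 1, by omega, ((frequently_target (i, q, z)).and_eventually hev).mono ?_⟩
  rintro t ⟨ht, hte⟩
  have hper : tPer t = q + 1 := by rw [tPer, ht]
  have hgen : tGen t = i := by rw [tGen, ht]
  have hhei : tHt t = height z := by rw [tHt, ht]
  have hpatz : ∀ n, tPat t n = z n := fun n => by rw [tPat, ht]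
  refine ⟨hper, fun l hl => hball ?_⟩
  have h1 := hrel.hit_le hw hP tPat_le hA hl
  rw [hper, hgen, hhei] at h1
  have h2 : ‖(B ^ (D.s t + (q + 1) * l)) x - y'‖ ≤ ε / 2 := by
    refine lp_norm_le_of_tsum_enorm hp _ (by positivity) ?_
    refine le_trans (le_of_eq ?_) ((h1.trans (add_le_add hq2 hte)).trans_eq (ENNReal.add_halves _))
    refine tsum_congr fun n => ?_
    rw [lp.coeFn_sub, Pi.sub_apply, shift_pow_apply hw hB, hy', hpatz]
    congr 4
    split_ifs with h
    · rfl
    · by_contra h5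
      exact h (hq1 n fun h6 => h5 (by simp [h6]))
  rw [Metric.mem_ball, dist_eq_norm]
  calc _ ≤ ‖(B ^ (D.s t + (q + 1) * l)) x - y'‖ + ‖y' - y‖ := norm_sub_le_norm_sub_add_norm_sub _ _ _
    _ < ε := by rw [norm_sub_rev y' y]; linarith

/-- The open set of vectors whose first two coordinates do not vanish. Block sequences visit it
rarely. -/
def twoNonzero (p : ℝ≥0∞) : Set (lp (fun _ : ℕ => ℝ) p) := {y | y 0 ≠ 0 ∧ y 1 ≠ 0}

lemma isOpen_twoNonzero (p : ℝ≥0∞) [Fact (1 ≤ p)] : IsOpen (twoNonzero p) :=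
  (isOpen_ne.preimage (continuous_coord 0)).inter (isOpen_ne.preimage (continuous_coord 1))

lemma twoNonzero_nonempty (p : ℝ≥0∞) : (twoNonzero p).Nonempty :=
  ⟨lp.single p 0 (1 : ℝ) + lp.single p 1 (1 : ℝ), by
    simp [twoNonzero, lp.single_apply]⟩

lemma notMem_twoNonzero {p : ℝ≥0∞} [Fact (1 ≤ p)] {w : ℕ → ℝ}
    (hw : ∀ k : ℕ, 1 ≤ k → 0 < w k) {per : ℕ → ℕ} {ht : ℕ → ℝ≥0∞} {Λ : ℕ → ℕ}
    (D : Blocks w p.toReal per ht Λ) {gen : ℕ → ℕ} {pat : ℕ → ℕ → ℝ}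
    {B : lp (fun _ : ℕ => ℝ) p →L[ℝ] lp (fun _ : ℕ => ℝ) p}
    (hB : ∀ (x : lp (fun _ : ℕ => ℝ) p) (n : ℕ), (B x) n = w (n + 1) * x (n + 1))
    {x : lp (fun _ : ℕ => ℝ) p} (hx : x ∈ blockSubspace D gen pat) {t m : ℕ}
    (h1 : D.L t ≤ m) (h2 : m + 1 < D.s t) : (B ^ m) x ∉ twoNonzero p := by
  rintro ⟨h3, h4⟩
  rw [shift_pow_apply hw hB] at h3 h4
  have hrel : D.Rel gen pat x := hx
  rw [zero_add] at h3
  rw [add_comm 1 m] at h4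
  rcases hrel.gap h1 h2 with h | h
  · exact h3 (by rw [h]; simp)
  · exact h4 (by rw [h]; simp)

/-- If the number of repetitions of the patterns grows fast enough, nonzero block sequences are
`𝒰`-frequently hypercyclic: each window is a positive proportion of all positions up to its end. -/
lemma uFreq_of_mem {p : ℝ≥0∞} [Fact (1 ≤ p)] (hp : p ≠ ∞) {w : ℕ → ℝ}
    (hw : ∀ k : ℕ, 1 ≤ k → 0 < w k) (D : Blocks w p.toReal tPer tHt fun n => n + 1)
    (hsum : ∑' n, invPow w p.toReal n ≠ ∞)
    {B : lp (fun _ : ℕ => ℝ) p →L[ℝ] lp (fun _ : ℕ => ℝ) p}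
    (hB : ∀ (x : lp (fun _ : ℕ => ℝ) p) (n : ℕ), (B x) n = w (n + 1) * x (n + 1))
    {x : lp (fun _ : ℕ => ℝ) p} (hx : x ∈ blockSubspace D tGen tPat) (hx0 : x ≠ 0) :
    IsUFreqHypercyclicVector B x := by
  intro U hU hne
  obtain ⟨q, hq, hfr⟩ := frequently_hits hp hw D hsum hB hx hx0 hU hne
  refine upperDensity_pos (c := 1 / (q + 1)) (by positivity) ?_
  have htend : Tendsto (fun t => D.L (t + 1)) atTop atTop :=
    D.L_strictMono.tendsto_atTop.comp (tendsto_add_atTop_nat 1)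
  refine htend.frequently (hfr.mono ?_)
  rintro t ⟨hper, hhit⟩
  have hL : D.L (t + 1) = D.s t + q * (D.s t + 1) := by rw [D.L_succ, hper]
  have hcard : D.s t + 1 ≤ ({n | (B ^ n) x ∈ U} ∩ Set.Iic (D.L (t + 1))).ncard := by
    have h1 : ((fun l => D.s t + q * l) '' Set.Iio (D.s t + 1)) ⊆
        {n | (B ^ n) x ∈ U} ∩ Set.Iic (D.L (t + 1)) := by
      rintro _ ⟨l, hl, rfl⟩
      refine ⟨hhit l hl, ?_⟩
      rw [Set.mem_Iic, hL]
      have : q * l ≤ q * (D.s t + 1) := Nat.mul_le_mul_left _ (le_of_lt hl)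
      simpa using this
    have h2 := Set.ncard_le_ncard h1 ((Set.finite_Iic _).subset Set.inter_subset_right)
    rwa [Set.ncard_image_of_injective _ (fun a b h => by
      have : q * a = q * b := by simpa using h
      exact Nat.eq_of_mul_eq_mul_left (by omega) this), ← Finset.coe_Iio, Set.ncard_coe_finset,
      Nat.card_Iio] at h2
  rw [div_le_div_iff₀ (by positivity) (by positivity), hL]
  have h3 : ((D.s t + 1 : ℕ) : ℝ) ≤ ({n | (B ^ n) x ∈ U} ∩ Set.Iic (D.s t + q * (D.s t + 1))).ncard := by
    rw [← hL]; exact_mod_cast hcard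
  push_cast at h3 ⊢
  have : (0 : ℝ) ≤ q := by positivity
  nlinarith

/-- The long gap before each window makes the lower density of the visits to `twoNonzero` zero. -/
lemma not_freq_of_mem {p : ℝ≥0∞} [Fact (1 ≤ p)] {w : ℕ → ℝ}
    (hw : ∀ k : ℕ, 1 ≤ k → 0 < w k) {per : ℕ → ℕ} {ht : ℕ → ℝ≥0∞} {Λ : ℕ → ℕ}
    (D : Blocks w p.toReal per ht Λ) {gen : ℕ → ℕ} {pat : ℕ → ℕ → ℝ}
    {B : lp (fun _ : ℕ => ℝ) p →L[ℝ] lp (fun _ : ℕ => ℝ) p}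
    (hB : ∀ (x : lp (fun _ : ℕ => ℝ) p) (n : ℕ), (B x) n = w (n + 1) * x (n + 1))
    {x : lp (fun _ : ℕ => ℝ) p} (hx : x ∈ blockSubspace D gen pat) :
    ¬ IsFreqHypercyclicVector B x := by
  intro h
  have h1 := h _ (isOpen_twoNonzero p) (twoNonzero_nonempty p)
  refine h1.not_ge (le_of_forall_pos_le_add fun ε hε => ?_)
  rw [zero_add]
  refine lowerDensity_le ?_
  have hs : ∀ t, t + 2 ≤ D.s t := fun t => by
    have := D.s_large t; nlinarith [Nat.zero_le (D.L t), Nat.zero_le (per t)]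
  have htend : Tendsto (fun t => D.s t - 2) atTop atTop :=
    tendsto_atTop_mono (fun t => by have := hs t; simp only [id]; omega) tendsto_id
  obtain ⟨T, hT⟩ := exists_nat_gt (1 / ε)
  refine htend.frequently (Eventually.frequently ?_)
  filter_upwards [eventually_ge_atTop T] with t ht
  have hcard : ({n | (B ^ n) x ∈ twoNonzero p} ∩ Set.Iic (D.s t - 2)).ncard ≤ D.L t := by
    have h2 : {n | (B ^ n) x ∈ twoNonzero p} ∩ Set.Iic (D.s t - 2) ⊆ Set.Iio (D.L t) := by
      rintro n ⟨h3, h4⟩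
      by_contra h5
      have h6 := hs t
      have h7 : n ≤ D.s t - 2 := h4
      exact notMem_twoNonzero hw D hB hx (not_lt.1 h5) (by omega) h3
    have h3 := Set.ncard_le_ncard h2 (Set.finite_Iio _)
    rwa [← Finset.coe_Iio, Set.ncard_coe_finset, Nat.card_Iio] at h3
  rw [div_le_iff₀ (by positivity)]
  have h2 := D.s_large t
  have h3 : (t + 1) * D.L t ≤ D.s t - 2 + 1 := by
    have : (t + 1) * D.L t + 2 ≤ (t + 1) * (D.L t + per t + 2) := by
      nlinarith [Nat.zero_le ((t + 1) * per t)]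
    omega
  have h4 : ((t : ℝ) + 1) * D.L t ≤ ((D.s t - 2 : ℕ) : ℝ) + 1 := by exact_mod_cast h3
  have h5 : (T : ℝ) ≤ t := by exact_mod_cast ht
  have h6 : 1 ≤ ε * (t + 1) := by
    rw [div_lt_iff₀ hε] at hT
    nlinarith
  have h7 : (({n | (B ^ n) x ∈ twoNonzero p} ∩ Set.Iic (D.s t - 2)).ncard : ℝ) ≤ D.L t := by
    exact_mod_cast hcard
  have h8 : (0 : ℝ) ≤ D.L t := by positivity
  calc _ ≤ (D.L t : ℝ) := h7
    _ ≤ ε * (t + 1) * D.L t := by nlinarith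
    _ = ε * ((t + 1) * D.L t) := by ring
    _ ≤ _ := mul_le_mul_of_nonneg_left h4 hε.le

/-- With a single copy of the pattern in every window, the windows are so short that block
sequences are not `𝒰`-frequently hypercyclic. -/
lemma not_uFreq_of_mem {p : ℝ≥0∞} [Fact (1 ≤ p)] {w : ℕ → ℝ}
    (hw : ∀ k : ℕ, 1 ≤ k → 0 < w k) {per : ℕ → ℕ} {ht : ℕ → ℝ≥0∞}
    (D : Blocks w p.toReal per ht fun _ => 1) {gen : ℕ → ℕ} {pat : ℕ → ℕ → ℝ}
    {B : lp (fun _ : ℕ => ℝ) p →L[ℝ] lp (fun _ : ℕ => ℝ) p}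
    (hB : ∀ (x : lp (fun _ : ℕ => ℝ) p) (n : ℕ), (B x) n = w (n + 1) * x (n + 1))
    {x : lp (fun _ : ℕ => ℝ) p} (hx : x ∈ blockSubspace D gen pat) :
    ¬ IsUFreqHypercyclicVector B x := by
  intro h
  have h1 := h _ (isOpen_twoNonzero p) (twoNonzero_nonempty p)
  refine h1.not_ge (le_of_forall_pos_le_add fun ε hε => ?_)
  rw [zero_add]
  refine upperDensity_le ?_
  obtain ⟨T, hT⟩ := exists_nat_gt (1 / ε)
  filter_upwards [eventually_ge_atTop (D.L (T + 1))] with N hN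
  set V := {n | (B ^ n) x ∈ twoNonzero p} with hV
  -- `t` is the index of the last window which can contribute visits up to time `N`.
  obtain ⟨t, htT, hsN, hsub⟩ : ∃ t, T ≤ t ∧ D.s t ≤ N + 1 ∧ V ∩ Set.Iic N ⊆ Set.Iio (D.L (t + 1)) := by
    obtain ⟨t', h2, h3⟩ := D.exists_block N
    have h4 : T + 1 ≤ t' := by
      have := D.L_strictMono.lt_iff_lt.1 (hN.trans_lt h3)
      omega
    rcases le_or_gt (D.s t') (N + 1) with h5 | h5
    · exact ⟨t', by omega, h5, fun n hn => lt_of_le_of_lt hn.2 h3⟩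
    · obtain ⟨t, rfl⟩ : ∃ t, t' = t + 1 := ⟨t' - 1, by omega⟩
      refine ⟨t, by omega, (D.s_le_L_succ t).trans (by omega), fun n hn => ?_⟩
      by_contra h6
      have h7 : n ≤ N := hn.2
      exact notMem_twoNonzero hw D hB hx (not_lt.1 h6) (by omega) hn.1
  have hcard : (V ∩ Set.Iic N).ncard ≤ D.L t + per t + 1 := by
    have h2 : V ∩ Set.Iic N ⊆ Set.Iio (D.L t) ∪ Set.Ico (D.s t - 1) (D.s t + per t) := by
      intro n hn
      have h3 : n < D.L (t + 1) := hsub hn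
      rw [D.L_succ, mul_one] at h3
      by_contra h4
      rw [Set.mem_union, not_or, Set.mem_Iio, Set.mem_Ico] at h4
      exact notMem_twoNonzero hw D hB hx (t := t) (by omega) (by omega) hn.1
    have h3 := (Set.ncard_le_ncard h2 ((Set.finite_Iio _).union (Set.finite_Ico _ _))).trans
      (Set.ncard_union_le _ _)
    rw [← Finset.coe_Iio, Set.ncard_coe_finset, Nat.card_Iio, ← Finset.coe_Ico,
      Set.ncard_coe_finset, Nat.card_Ico] at h3
    omega
  rw [div_le_iff₀ (by positivity)]
  have h2 := D.s_large t
  have h3 : ((t : ℝ) + 1) * (D.L t + per t + 2) ≤ N + 1 := by exact_mod_cast h2.trans hsN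
  have h5 : (T : ℝ) ≤ t := by exact_mod_cast htT
  have h6 : 1 ≤ ε * (t + 1) := by
    rw [div_lt_iff₀ hε] at hT
    nlinarith
  have h7 : ((V ∩ Set.Iic N).ncard : ℝ) ≤ D.L t + per t + 1 := by exact_mod_cast hcard
  have h8 : (0 : ℝ) ≤ D.L t + per t + 2 := by positivity
  calc _ ≤ (D.L t + per t + 2 : ℝ) := by linarith
    _ ≤ ε * (t + 1) * (D.L t + per t + 2) := by nlinarith
    _ = ε * ((t + 1) * (D.L t + per t + 2)) := by ring
    _ ≤ _ := mul_le_mul_of_nonneg_left h3 hε.le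

lemma hypercyclic_of_mem {p : ℝ≥0∞} [Fact (1 ≤ p)] (hp : p ≠ ∞) {w : ℕ → ℝ}
    (hw : ∀ k : ℕ, 1 ≤ k → 0 < w k) (D : Blocks w p.toReal tPer tHt fun _ => 1)
    (hsum : ∑' n, invPow w p.toReal n ≠ ∞)
    {B : lp (fun _ : ℕ => ℝ) p →L[ℝ] lp (fun _ : ℕ => ℝ) p}
    (hB : ∀ (x : lp (fun _ : ℕ => ℝ) p) (n : ℕ), (B x) n = w (n + 1) * x (n + 1))
    {x : lp (fun _ : ℕ => ℝ) p} (hx : x ∈ blockSubspace D tGen tPat) (hx0 : x ≠ 0) :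
    IsHypercyclicVector B x := by
  refine dense_iff_inter_open.2 fun U hU hne => ?_
  obtain ⟨q, -, hfr⟩ := frequently_hits hp hw D hsum hB hx hx0 hU hne
  obtain ⟨t, -, h⟩ := hfr.exists
  exact ⟨_, h 0 one_pos, _, rfl⟩

/-! ### The equivalence -/

/-- Theorem 1.2. For `1 ≤ p < ∞` and a bounded positive weight
`w = (ω_k)_{k ≥ 1}` (coordinates of `ℓ_p` are indexed by `ℕ`, index `n`
corresponding to the paper's position `n+1`, so that the weighted backward shift
`B_w` satisfies `(B_w x)_n = ω_{n+1} x_{n+1}`), the following are equivalent: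
(i) `∑_{k ≥ 1} (ω_1 ⋯ ω_k)^{-p} < ∞` and `sup_{n ≥ 1} inf_{k ≥ 1} ∏_{j=1}^n ω_{k+j} ≤ 1`;
(ii) `B_w` admits a `𝒰`-frequently hypercyclic subspace containing no frequently
hypercyclic vector for `B_w`;
(iii) `B_w` is `𝒰`-frequently hypercyclic and admits a hypercyclic subspace containing
no `𝒰`-frequently hypercyclic vector for `B_w`. -/
theorem uFreqHypercyclicSubspace_without_freqHypercyclic_tfae (p : ℝ≥0∞) [Fact (1 ≤ p)]
    (hp : p ≠ ∞)
    (w : ℕ → ℝ) (hwpos : ∀ k : ℕ, 1 ≤ k → 0 < w k) (hwbdd : ∃ C : ℝ, ∀ k : ℕ, 1 ≤ k → w k ≤ C)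
    (B : lp (fun _ : ℕ => ℝ) p →L[ℝ] lp (fun _ : ℕ => ℝ) p)
    (hB : ∀ (x : lp (fun _ : ℕ => ℝ) p) (n : ℕ), (B x) n = w (n + 1) * x (n + 1)) :
    List.TFAE
      [(Summable fun k : ℕ => (∏ j ∈ Finset.Icc 1 (k + 1), w j) ^ (-(p.toReal))) ∧
          ∀ n : ℕ, 1 ≤ n → (⨅ k : ℕ, ∏ j ∈ Finset.Icc 1 n, w (k + 1 + j)) ≤ 1,
        ∃ Y : Submodule ℝ (lp (fun _ : ℕ => ℝ) p),
          IsClosed (Y : Set (lp (fun _ : ℕ => ℝ) p)) ∧ ¬ FiniteDimensional ℝ Y ∧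
          (∀ x ∈ Y, x ≠ 0 → IsUFreqHypercyclicVector B x) ∧
          ∀ x ∈ Y, ¬ IsFreqHypercyclicVector B x,
        (∃ x : lp (fun _ : ℕ => ℝ) p, IsUFreqHypercyclicVector B x) ∧
          ∃ Y : Submodule ℝ (lp (fun _ : ℕ => ℝ) p),
            IsClosed (Y : Set (lp (fun _ : ℕ => ℝ) p)) ∧ ¬ FiniteDimensional ℝ Y ∧
            (∀ x ∈ Y, x ≠ 0 → IsHypercyclicVector B x) ∧
            ∀ x ∈ Y, ¬ IsUFreqHypercyclicVector B x] := by
  obtain ⟨C₀, hC₀⟩ := hwbdd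
  set C := max C₀ 1 with hCdef
  have hC1 : 1 ≤ C := le_max_right _ _
  have hC : ∀ k : ℕ, 1 ≤ k → w k ≤ C := fun k hk => (hC₀ k hk).trans (le_max_left _ _)
  have hP := toReal_pos_of_fact hp
  have hsumiff : (Summable fun k : ℕ => (∏ j ∈ Finset.Icc 1 (k + 1), w j) ^ (-(p.toReal))) ↔
      Summable fun n => (cumW w n) ^ (-p.toReal) :=
    summable_nat_add_iff (f := fun n => (cumW w n) ^ (-p.toReal)) 1
  have hblocks : (Summable fun n => (cumW w n) ^ (-p.toReal)) →
      (∀ n : ℕ, 1 ≤ n → (⨅ k : ℕ, ∏ j ∈ Finset.Icc 1 n, w (k + 1 + j)) ≤ 1) →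
      ∀ Λ : ℕ → ℕ, Nonempty (Blocks w p.toReal tPer tHt Λ) := fun h1 h2 Λ =>
    Blocks.nonempty hP (tsum_invPow_ne_top hwpos hP h1)
      (exists_good_index hwpos hC1 hC (tendsto_cumW hwpos hP h1) h2) _ _
      (fun _ => height_ne_top _) Λ
  have hvec : ∀ Y : Submodule ℝ (lp (fun _ : ℕ => ℝ) p), ¬ FiniteDimensional ℝ Y →
      ∃ y ∈ Y, y ≠ 0 := fun Y hY => by
    obtain ⟨y, hy, hy1, -⟩ := exists_unit_vanishing hY 0
    exact ⟨y, hy, fun h => by simp [h] at hy1⟩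
  tfae_have 1 → 2 := by
    rintro ⟨h1, h2⟩
    rw [hsumiff] at h1
    obtain ⟨D⟩ := hblocks h1 h2 fun n => n + 1
    exact ⟨blockSubspace D tGen tPat, isClosed_blockSubspace D,
      not_finiteDimensional_blockSubspace D hp hwpos tPat_le,
      fun x hx hx0 => uFreq_of_mem hp hwpos D (tsum_invPow_ne_top hwpos hP h1) hB hx hx0,
      fun x hx => not_freq_of_mem hwpos D hB hx⟩
  tfae_have 1 → 3 := by
    rintro ⟨h1, h2⟩
    rw [hsumiff] at h1
    obtain ⟨D⟩ := hblocks h1 h2 fun n => n + 1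
    obtain ⟨D'⟩ := hblocks h1 h2 fun _ => 1
    have hsum := tsum_invPow_ne_top hwpos hP h1
    obtain ⟨x, hx, hx0⟩ := hvec (blockSubspace D tGen tPat)
      (not_finiteDimensional_blockSubspace D hp hwpos tPat_le)
    exact ⟨⟨x, uFreq_of_mem hp hwpos D hsum hB hx hx0⟩,
      blockSubspace D' tGen tPat, isClosed_blockSubspace D',
      not_finiteDimensional_blockSubspace D' hp hwpos tPat_le,
      fun x hx hx0 => hypercyclic_of_mem hp hwpos D' hsum hB hx hx0,
      fun x hx => not_uFreq_of_mem hwpos D' hB hx⟩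
  tfae_have 2 → 1 := by
    rintro ⟨Y, hYc, hY, hYu, -⟩
    obtain ⟨y, hy, hy0⟩ := hvec Y hY
    exact ⟨hsumiff.2 (summable_of_uFreqHypercyclic hp hwpos hC1 hC hB (hYu y hy hy0)),
      fun n hn => iInf_prod_le_one_of_subspace hp hwpos hC1 hC hB hY hYc
        (fun x hx hx0 => (hYu x hx hx0).isHypercyclicVector) n hn⟩
  tfae_have 3 → 1 := by
    rintro ⟨⟨x, hx⟩, Y, hYc, hY, hYh, -⟩
    exact ⟨hsumiff.2 (summable_of_uFreqHypercyclic hp hwpos hC1 hC hB hx),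
      fun n hn => iInf_prod_le_one_of_subspace hp hwpos hC1 hC hB hY hYc hYh n hn⟩
  tfae_finish
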